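/- arXiv:1502.00991 — 8 statements merged into one kernel-verified Lean document; each statement's English description precedes it below -/
import Mathlib

section
/- Let G be a Hausdorff topological group and let H be a dense subgroup of G. If H, equipped with the subspace topology, is a locally compact space, then H is an open subgroup of G (and consequently H = G). -/
/-!
In a Hausdorff space a locally compact subspace is locally closed, because a compact neighborhood in
the subspace stays closed in the ambient space. A dense locally closed set is open, being open in
its closure. The group structure enters only to make an open subgroup closed: its complement is a
union of cosets.
-/

open scoped Topology

section LocallyClosed

variable {X : Type*} [TopologicalSpace X] {s : Set X}

theorem isLocallyClosed_of_weaklyLocallyCompactSpace [T2Space X] [WeaklyLocallyCompactSpace s] :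
    IsLocallyClosed s := by
  refine ((isLocallyClosed_tfae s).out 0 3).mpr fun x hx ↦ ?_
  obtain ⟨K, hK, hKx⟩ := exists_compact_mem_nhds (⟨x, hx⟩ : s)
  have image_mem : Subtype.val '' K ∈ 𝓝[s] x := mem_nhds_subtype_iff_nhdsWithin.mp hKx
  have image_closed : IsClosed (Subtype.val '' K) := (hK.image continuous_subtype_val).isClosed
  obtain ⟨U, hU, hxU, hUK⟩ := mem_nhdsWithin.mp image_mem
  refine ⟨U, hxU, hU, ?_⟩
  calc
    U ∩ closure s ⊆ closure (U ∩ s) := hU.inter_closure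
    _ ⊆ Subtype.val '' K := closure_minimal hUK image_closed
    _ ⊆ s := Subtype.coe_image_subset s K

theorem isOpen_of_isLocallyClosed_of_dense (hs : IsLocallyClosed s) (hd : Dense s) :
    IsOpen s := by
  have coborder_eq : coborder s = s := by
    rw [coborder_eq_union_closure_compl, hd.closure_eq, Set.compl_univ, Set.union_empty]
  exact coborder_eq ▸ hs.isOpen_coborder

end LocallyClosed

section Group

variable {G : Type*} [Group G] [TopologicalSpace G] [SeparatelyContinuousMul G] {H : Subgroup G}

theorem subgroup_eq_top_of_isOpen_of_dense (ho : IsOpen (H : Set G)) (hd : Dense (H : Set G)) :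
    H = ⊤ := by
  rw [← Subgroup.coe_eq_univ, ← (H.isClosed_of_isOpen ho).closure_eq, hd.closure_eq]

theorem dense_subgroup_open_of_locallyCompact_general [T2Space G] [WeaklyLocallyCompactSpace H]
    (hd : Dense (H : Set G)) : IsOpen (H : Set G) ∧ H = ⊤ := by
  have locallyClosed : IsLocallyClosed (H : Set G) :=
    isLocallyClosed_of_weaklyLocallyCompactSpace
  have isOpen : IsOpen (H : Set G) := isOpen_of_isLocallyClosed_of_dense locallyClosed hd
  exact ⟨isOpen, subgroup_eq_top_of_isOpen_of_dense isOpen hd⟩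

end Group

/-- If a dense subgroup `H` of a Hausdorff topological group `G` is locally compact
in the subspace topology, then `H` is open (and hence `H = G`). -/
theorem dense_subgroup_open_of_locallyCompact {G : Type*} [Group G] [TopologicalSpace G]
    [IsTopologicalGroup G] [T2Space G] (H : Subgroup G)
    (hdense : Dense (H : Set G)) (hH : LocallyCompactSpace H) :
    IsOpen (H : Set G) ∧ H = ⊤ :=
  dense_subgroup_open_of_locallyCompact_general hdense
end

section
/- Let G be an abstract group and let H be a subgroup of G equipped with a topology making H a topological group. Suppose that for every open subset U of H and all elements g, g' of G, the set of elements h of H such that h = g·u·g' for some u in U is open in H. Then there exists a unique topology on G making G a topological group such that the inclusion map H → G is an open embedding (i.e., a homeomorphism onto an open subset of G). -/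
/-!
Give `G` the finest topology for which all the maps `h ↦ g * h * g'` from `H` are continuous.
Translations of `G` permute these maps, so multiplication is separately continuous, and the
hypothesis on the sets `gUg' ∩ H` says exactly that open subsets of `H` stay open in `G`. Hence the
neighbourhoods of `1` in `G` are those of `1` in `H`, where multiplication and inversion are jointly
continuous, and translations carry this to all of `G`. Uniqueness holds because a group topology is
determined by its neighbourhoods of `1`.
-/

open Filter Topology

/-- The finest topology on `G` for which all two-sided translates `x ↦ g * f x * g'` of the map
`f : X → G` are continuous. It extends the topology of a subgroup, embedded by `f`, to the whole
group. -/
abbrev translateTopology {X G : Type*} [TopologicalSpace X] [Mul G] (f : X → G) :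
    TopologicalSpace G :=
  ⨆ (g : G) (g' : G), .coinduced (fun x ↦ g * f x * g') inferInstance

section TranslateTopology

variable {X G : Type*} [TopologicalSpace X]

theorem isOpen_translateTopology_iff [Mul G] {f : X → G} {W : Set G} :
    IsOpen[translateTopology f] W ↔ ∀ g g' : G, IsOpen ((fun x ↦ g * f x * g') ⁻¹' W) := by
  simp only [isOpen_iSup_iff, isOpen_coinduced]

theorem separatelyContinuousMul_translateTopology [Semigroup G] (f : X → G) :
    @SeparatelyContinuousMul G (translateTopology f) _ := by
  let := translateTopology f
  refine ⟨fun {a} ↦ ?_, fun {a} ↦ ?_⟩ <;>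
    refine continuous_def.2 fun W hW ↦ isOpen_translateTopology_iff.2 fun g g' ↦ ?_
  · simpa only [Set.preimage_preimage, mul_assoc] using
      isOpen_translateTopology_iff.1 hW (a * g) g'
  · simpa only [Set.preimage_preimage, mul_assoc] using
      isOpen_translateTopology_iff.1 hW g (g' * a)

theorem continuous_translateTopology [MulOneClass G] (f : X → G) :
    Continuous[_, translateTopology f] f := by
  let := translateTopology f
  refine continuous_def.2 fun W hW ↦ ?_
  simpa only [one_mul, mul_one] using isOpen_translateTopology_iff.1 hW 1 1

theorem isOpenMap_translateTopology [Group G] {f : X → G}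
    (hf : ∀ U : Set X, IsOpen U → ∀ g g' : G, IsOpen {x | ∃ u ∈ U, f x = g * f u * g'}) :
    @IsOpenMap X G _ (translateTopology f) f := by
  intro U hU
  refine isOpen_translateTopology_iff.2 fun g g' ↦ ?_
  have preimage_image : (fun x ↦ g * f x * g') ⁻¹' (f '' U) =
      {x | ∃ u ∈ U, f x = g⁻¹ * f u * g'⁻¹} := by
    ext x
    simp only [Set.mem_preimage, Set.mem_image, Set.mem_ofPred_eq, eq_mul_inv_iff_mul_eq,
      eq_inv_mul_iff_mul_eq, mul_assoc, eq_comm]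
  rw [preimage_image]
  exact hf U hU g⁻¹ g'⁻¹

end TranslateTopology

theorem isTopologicalGroup_of_continuous_of_isOpenMap {K G : Type*} [Group K] [TopologicalSpace K]
    [IsTopologicalGroup K] [Group G] [TopologicalSpace G] [SeparatelyContinuousMul G]
    {f : K →* G} (hcont : Continuous f) (hopen : IsOpenMap f) : IsTopologicalGroup G := by
  have nhds_one : 𝓝 (1 : G) = map f (𝓝 1) := by
    rw [hopen.map_nhds_eq hcont.continuousAt, map_one]
  have nhds_eq_left (x : G) : 𝓝 x = map (x * ·) (𝓝 1) := by
    simpa using ((Homeomorph.mulLeft x).map_nhds_eq 1).symm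
  have nhds_eq_right (x : G) : 𝓝 x = map (· * x) (𝓝 1) := by
    simpa using ((Homeomorph.mulRight x).map_nhds_eq 1).symm
  refine .of_nhds_one' ?_ ?_ nhds_eq_left nhds_eq_right
  · have tendsto_mul_one : Tendsto (fun p : K × K ↦ f (p.1 * p.2)) (𝓝 1 ×ˢ 𝓝 1) (𝓝 1) := by
      rw [← nhds_prod_eq]
      exact (hcont.comp continuous_mul).tendsto' _ _ (by simp)
    rw [nhds_one, prod_map_map_eq, tendsto_map'_iff, ← nhds_one]
    simpa only [Function.comp_def, Function.uncurry, map_mul] using tendsto_mul_one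
  · have tendsto_inv_one : Tendsto (fun k : K ↦ f k⁻¹) (𝓝 1) (𝓝 1) :=
      (hcont.comp continuous_inv).tendsto' _ _ (by simp)
    rw [nhds_one, tendsto_map'_iff, ← nhds_one]
    simpa only [Function.comp_def, map_inv] using tendsto_inv_one

theorem group_topology_eq_of_continuous_of_isOpenMap {X G : Type*} [TopologicalSpace X] [Group G]
    {f : X → G} {x : X} (hx : f x = 1) {τ₁ τ₂ : TopologicalSpace G}
    (hτ₁ : @IsTopologicalGroup G τ₁ _) (hτ₂ : @IsTopologicalGroup G τ₂ _)
    (hcont₁ : Continuous[_, τ₁] f) (hopen₁ : @IsOpenMap X G _ τ₁ f)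
    (hcont₂ : Continuous[_, τ₂] f) (hopen₂ : @IsOpenMap X G _ τ₂ f) : τ₁ = τ₂ := by
  have nhds_one {τ : TopologicalSpace G} (hcont : Continuous f) (hopen : IsOpenMap f) :
      𝓝 (1 : G) = map f (𝓝 x) := by
    rw [← hx, hopen.map_nhds_eq hcont.continuousAt]
  exact hτ₁.ext hτ₂ ((nhds_one hcont₁ hopen₁).trans (nhds_one hcont₂ hopen₂).symm)

theorem exists_unique_group_topology_of_subgroup_general {K G : Type*} [Group K]
    [TopologicalSpace K] [IsTopologicalGroup K] [Group G] (f : K →* G)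
    (hf : ∀ U : Set K, IsOpen U → ∀ g g' : G, IsOpen {k | ∃ u ∈ U, f k = g * f u * g'}) :
    ∃! τ : TopologicalSpace G,
      @IsTopologicalGroup G τ _ ∧ Continuous[_, τ] f ∧ @IsOpenMap K G _ τ f := by
  have hcont := continuous_translateTopology f
  have hopen := isOpenMap_translateTopology hf
  have hgroup : @IsTopologicalGroup G (translateTopology f) _ :=
    let := translateTopology f
    have := separatelyContinuousMul_translateTopology f
    isTopologicalGroup_of_continuous_of_isOpenMap hcont hopen
  refine ⟨translateTopology f, ⟨hgroup, hcont, hopen⟩, ?_⟩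
  rintro τ ⟨hτ, hcontτ, hopenτ⟩
  exact group_topology_eq_of_continuous_of_isOpenMap (map_one f) hτ hgroup hcontτ hopenτ hcont hopen

/-- If `H` is a subgroup of an abstract group `G`, carrying a topology making it a
topological group, and for every open `U ⊆ H` and all `g, g' ∈ G` the set
`gUg' ∩ H` is open in `H`, then there is a unique group topology on `G` making
the inclusion `H → G` an open embedding. -/
theorem exists_unique_group_topology_of_subgroup {G : Type*} [Group G] (H : Subgroup G)
    [TopologicalSpace H] [IsTopologicalGroup H]
    (hcond : ∀ U : Set H, IsOpen U → ∀ g g' : G,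
      IsOpen {h : H | ∃ u ∈ U, (h : G) = g * (u : G) * g'}) :
    ∃! τ : TopologicalSpace G,
      @IsTopologicalGroup G τ _ ∧ @Topology.IsOpenEmbedding (↥H) G _ τ ((↑) : H → G) := by
  simpa only [isOpenEmbedding_iff_continuous_injective_isOpenMap, Subtype.val_injective, true_and,
    Subgroup.coe_subtype]
    using exists_unique_group_topology_of_subgroup_general H.subtype hcond
end

section
/- Let X be a compact Hausdorff topological space and let G be a group acting faithfully on X by homeomorphisms. Let 𝒰 be a collection of open subsets of X forming a basis for the topology of X, and suppose G acts transitively on 𝒰 (for all U, V ∈ 𝒰 there exists g ∈ G with g·U = V). Let H be a nontrivial normal subgroup of G. Then for every V ∈ 𝒰 and every g ∈ G whose support {x ∈ X : g·x ≠ x} is contained in V, there exists ρ ∈ H such that ρ·x = g·x for all x ∈ V. -/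
open Pointwise

/-!
An element of `H` that moves a point carries some open neighbourhood `W` of that point off itself.
Moving `V` into `W` and conjugating yields `f ∈ H` carrying `V` off itself. The commutator
`⁅g, f⁆ = g * (f * g⁻¹ * f⁻¹)` lies in `H` by normality, and its second factor is supported in
`f • V`, hence is trivial on `V`, so `⁅g, f⁆` agrees with `g` there.
-/

open MulAction TopologicalSpace
open scoped commutatorElement Topology

section Topology

variable {X : Type*} [TopologicalSpace X]

theorem exists_isOpen_disjoint_image_of_apply_ne [T2Space X] {f : X → X} {x : X}
    (hf : ContinuousAt f x) (hx : f x ≠ x) :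
    ∃ W, IsOpen W ∧ x ∈ W ∧ Disjoint (f '' W) W := by
  obtain ⟨A, B, hA, hB, hfxA, hxB, hAB⟩ := t2_separation hx
  have hW : f ⁻¹' A ∩ B ∈ 𝓝 x :=
    Filter.inter_mem (hf (hA.mem_nhds hfxA)) (hB.mem_nhds hxB)
  obtain ⟨W, hWAB, hWopen, hxW⟩ := mem_nhds_iff.1 hW
  have hWA : f '' W ⊆ A := Set.image_subset_iff.2 fun _ hy => (hWAB hy).1
  exact ⟨W, hWopen, hxW, hAB.mono hWA fun _ hy => (hWAB hy).2⟩

/-- A subset `V` of `X` is compressible under `G` if some translate of it fits inside any given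
nonempty open set. -/
def IsCompressible (G : Type*) [SMul G X] (V : Set X) : Prop :=
  ∀ W : Set X, IsOpen W → W.Nonempty → ∃ k : G, k • V ⊆ W

theorem isCompressible_of_isTopologicalBasis {G : Type*} [SMul G X] {𝒰 : Set (Set X)} {V : Set X}
    (h𝒰 : IsTopologicalBasis 𝒰) (hV : ∀ U ∈ 𝒰, ∃ k : G, k • V ⊆ U) :
    IsCompressible G V := by
  rintro W hW ⟨x, hxW⟩
  obtain ⟨U, hU, -, hUW⟩ := h𝒰.exists_subset_of_mem_open hxW hW
  obtain ⟨k, hk⟩ := hV U hU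
  exact ⟨k, hk.trans hUW⟩

end Topology

section Action

variable {G X : Type*} [Group G] [MulAction G X]

theorem disjoint_conj_smul_of_smul_subset {h k : G} {V W : Set X}
    (hW : Disjoint (h • W) W) (hk : k • V ⊆ W) : Disjoint ((k⁻¹ * h * k) • V) V := by
  rw [mul_assoc, mul_smul, mul_smul, Set.disjoint_smul_set_left, inv_inv]
  exact hW.mono (Set.smul_set_mono hk) hk

theorem commutator_smul_eq_smul_of_disjoint {f g : G} {V : Set X}
    (hg : (fixedBy X g)ᶜ ⊆ V) (hf : Disjoint (f • V) V) {x : X} (hx : x ∈ V) :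
    ⁅g, f⁆ • x = g • x := by
  have hfx : f⁻¹ • x ∉ V := fun h =>
    Set.disjoint_right.1 hf hx (Set.mem_smul_set_iff_inv_smul_mem.2 h)
  have hfix : f⁻¹ • x ∈ fixedBy X g⁻¹ := by
    rw [fixedBy_inv]
    exact Set.compl_subset_comm.1 hg hfx
  calc ⁅g, f⁆ • x = g • f • g⁻¹ • f⁻¹ • x := by simp only [commutatorElement_def, mul_smul]
    _ = g • x := by rw [mem_fixedBy.1 hfix, smul_inv_smul]

theorem exists_mem_exists_smul_ne_of_ne_bot [FaithfulSMul G X] {H : Subgroup G} (hH : H ≠ ⊥) :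
    ∃ h ∈ H, ∃ x : X, h • x ≠ x := by
  obtain ⟨h, hhH, hh⟩ := H.bot_or_exists_ne_one.resolve_left hH
  refine ⟨h, hhH, ?_⟩
  contrapose! hh
  exact fixedBy_eq_univ_iff_eq_one.1 (Set.eq_univ_of_forall hh)

variable [TopologicalSpace X] [T2Space X] [ContinuousConstSMul G X]

theorem IsCompressible.exists_mem_disjoint_smul {V : Set X} (hV : IsCompressible G V)
    {H : Subgroup G} [H.Normal] (hH : ∃ h ∈ H, ∃ x : X, h • x ≠ x) :
    ∃ f ∈ H, Disjoint (f • V) V := by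
  obtain ⟨h, hhH, x, hx⟩ := hH
  obtain ⟨W, hWopen, hxW, hW⟩ :=
    exists_isOpen_disjoint_image_of_apply_ne (continuous_const_smul h).continuousAt hx
  obtain ⟨k, hk⟩ := hV W hWopen ⟨x, hxW⟩
  exact ⟨k⁻¹ * h * k, Subgroup.Normal.conj_mem' ‹_› h hhH k,
    disjoint_conj_smul_of_smul_subset hW hk⟩

theorem exists_mem_normal_subgroup_eq_on_basis_set_general {V : Set X} (hV : IsCompressible G V)
    {H : Subgroup G} [H.Normal] (hH : ∃ h ∈ H, ∃ x : X, h • x ≠ x)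
    {g : G} (hg : (fixedBy X g)ᶜ ⊆ V) :
    ∃ ρ ∈ H, ∀ x ∈ V, ρ • x = g • x := by
  obtain ⟨f, hfH, hf⟩ := hV.exists_mem_disjoint_smul hH
  have hcomm : ⁅g, f⁆ ∈ H := Subgroup.commutator_le_right ⊤ H
    (Subgroup.commutator_mem_commutator (Subgroup.mem_top g) hfH)
  exact ⟨⁅g, f⁆, hcomm, fun _ => commutator_smul_eq_smul_of_disjoint hg hf⟩

end Action

/-- Epstein-type lemma: if a group `G` acts faithfully by homeomorphisms on a compact
Hausdorff space `X`, transitively on a basis `𝒰` of open sets, and `H` is a nontrivial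
normal subgroup of `G`, then every `g ∈ G` supported in a basis set `V ∈ 𝒰` agrees on
`V` with some element `ρ ∈ H`. -/
theorem exists_mem_normal_subgroup_eq_on_basis_set
    {X : Type*} [TopologicalSpace X] [CompactSpace X] [T2Space X]
    {G : Type*} [Group G] [MulAction G X] [FaithfulSMul G X]
    (hcont : ∀ g : G, Continuous fun x : X => g • x)
    (𝒰 : Set (Set X)) (hbasis : TopologicalSpace.IsTopologicalBasis 𝒰)
    (htrans : ∀ U ∈ 𝒰, ∀ V ∈ 𝒰, ∃ g : G, g • U = V)
    (H : Subgroup G) (hnormal : H.Normal) (hnontriv : H ≠ ⊥) :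
    ∀ V ∈ 𝒰, ∀ g : G, {x : X | g • x ≠ x} ⊆ V →
      ∃ ρ ∈ H, ∀ x ∈ V, ρ • x = g • x := by
  intro V hV g hg
  have : ContinuousConstSMul G X := ⟨hcont⟩
  have hVcompr : IsCompressible G V := isCompressible_of_isTopologicalBasis hbasis
    fun U hU => (htrans V hV U hU).imp fun _ hk => hk.subset
  exact exists_mem_normal_subgroup_eq_on_basis_set_general hVcompr
    (exists_mem_exists_smul_ne_of_ne_bot hnontriv) hg
end

section
/- Let X be a compact Hausdorff topological space and let G be a group acting faithfully on X by homeomorphisms. Let 𝒰 be a collection of open subsets of X forming a basis for the topology of X, and suppose G acts transitively on 𝒰. Let H be a nontrivial normal subgroup of G, and suppose there exist α₁, α₂ ∈ H and a point x ∈ X such that the three points x, α₁·x, α₂·x are pairwise distinct. Then for every V ∈ 𝒰 and all g₁, g₂ ∈ G whose supports {x : g₁·x ≠ x} and {x : g₂·x ≠ x} are both contained in V, there exist ρ₁, ρ₂ ∈ H such that the commutators satisfy [g₁, g₂] = [ρ₁, ρ₂] in G. -/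
open Pointwise
open scoped commutatorElement

/-!
If `V`, `β₁ • V` and `β₂ • V` are pairwise disjoint, then elements of `G` supported in different
ones of these sets commute. For `g₁, g₂` supported in `V`, the element `⁅gᵢ, βᵢ⁆` is `gᵢ` times an
element supported in `βᵢ • V`, and these extra factors drop out of the commutator:
`⁅⁅g₁, β₁⁆, ⁅g₂, β₂⁆⁆ = ⁅g₁, g₂⁆`. If `H` is normal, then `βᵢ ∈ H` forces `⁅gᵢ, βᵢ⁆ ∈ H`. A small
neighbourhood of `x` has disjoint translates under `1, α₁, α₂`; when some `g` moves `V` into it, the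
conjugates `βᵢ = g⁻¹ * αᵢ * g` have the required property.
-/

open MulAction Topology

section Commutator

variable {G : Type*} [Group G]

theorem commutatorElement_mul_left_of_commute {a k : G} (g : G) (h : Commute a k) :
    ⁅g * a, k⁆ = ⁅g, k⁆ := by
  rw [commutatorElement_mul_left_eq_conj_mul, h.commutator_eq, mul_one, mul_inv_cancel,
    one_mul]

theorem commutatorElement_mul_right_of_commute {g b : G} (k : G) (h : Commute g b) :
    ⁅g, k * b⁆ = ⁅g, k⁆ := by
  rw [commutatorElement_mul_right_eq_mul_conj, h.commutator_eq, mul_one, mul_inv_cancel_right]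

theorem commutatorElement_eq_mul_inv_conj (g b : G) : ⁅g, b⁆ = g * (b * g * b⁻¹)⁻¹ := by
  group

theorem commutatorElement_commutatorElement_of_commute_conj {g₁ g₂ b₁ b₂ : G}
    (h₁ : Commute (b₁ * g₁ * b₁⁻¹) g₂) (h₂ : Commute g₁ (b₂ * g₂ * b₂⁻¹))
    (h₁₂ : Commute (b₁ * g₁ * b₁⁻¹) (b₂ * g₂ * b₂⁻¹)) :
    ⁅⁅g₁, b₁⁆, ⁅g₂, b₂⁆⁆ = ⁅g₁, g₂⁆ := by
  rw [commutatorElement_eq_mul_inv_conj g₁, commutatorElement_eq_mul_inv_conj g₂,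
    commutatorElement_mul_left_of_commute _ (h₁.mul_right h₁₂.inv_right).inv_left,
    commutatorElement_mul_right_of_commute _ h₂.inv_right]

theorem commutatorElement_mem_of_mem_right {H : Subgroup G} [H.Normal] (g : G) {b : G}
    (hb : b ∈ H) : ⁅g, b⁆ ∈ H :=
  Subgroup.commutator_le_right ⊤ H (Subgroup.commutator_mem_commutator (Subgroup.mem_top g) hb)

end Commutator

section Action

variable {X G : Type*} [Group G] [MulAction G X]

theorem commute_of_disjoint_compl_fixedBy [FaithfulSMul G X] {g h : G}
    (hgh : Disjoint (fixedBy X g)ᶜ (fixedBy X h)ᶜ) : Commute g h := by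
  have hperm : (toPerm g : Equiv.Perm X).Disjoint (toPerm h) := fun y ↦ by
    by_contra! hy
    exact Set.disjoint_left.1 hgh hy.1 hy.2
  exact Commute.of_map (f := toPermHom G X) toPerm_injective hperm.commute

theorem compl_fixedBy_conj_subset_smul {g : G} {V : Set X} (hg : (fixedBy X g)ᶜ ⊆ V) (b : G) :
    (fixedBy X (b * g * b⁻¹))ᶜ ⊆ b • V := by
  rw [← smul_fixedBy, ← Set.smul_set_compl]
  exact Set.smul_set_mono hg

theorem commutatorElement_commutatorElement_of_disjoint_smul [FaithfulSMul G X] {V : Set X}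
    {g₁ g₂ b₁ b₂ : G} (hg₁ : (fixedBy X g₁)ᶜ ⊆ V) (hg₂ : (fixedBy X g₂)ᶜ ⊆ V)
    (hb₁ : Disjoint V (b₁ • V)) (hb₂ : Disjoint V (b₂ • V)) (hb₁₂ : Disjoint (b₁ • V) (b₂ • V)) :
    ⁅⁅g₁, b₁⁆, ⁅g₂, b₂⁆⁆ = ⁅g₁, g₂⁆ := by
  have hconj₁ := compl_fixedBy_conj_subset_smul hg₁ b₁
  have hconj₂ := compl_fixedBy_conj_subset_smul hg₂ b₂
  apply commutatorElement_commutatorElement_of_commute_conj <;>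
    apply commute_of_disjoint_compl_fixedBy (X := X)
  · exact hb₁.symm.mono hconj₁ hg₂
  · exact hb₂.mono hg₁ hconj₂
  · exact hb₁₂.mono hconj₁ hconj₂

theorem disjoint_conj_smul_conj_smul {V : Set X} {g a b : G}
    (h : Disjoint (a • g • V) (b • g • V)) :
    Disjoint ((g⁻¹ * a * g) • V) ((g⁻¹ * b * g) • V) := by
  simpa only [mul_smul, Set.disjoint_smul_set] using h

variable [TopologicalSpace X]

theorem eventually_smallSets_disjoint_smul [T2Space X] [ContinuousConstSMul G X] {x : X} {a b : G}
    (h : a • x ≠ b • x) : ∀ᶠ W in (𝓝 x).smallSets, Disjoint (a • W) (b • W) := by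
  obtain ⟨A, hA, B, hB, hAB⟩ := Filter.disjoint_iff.1 (disjoint_nhds_nhds.2 h)
  refine Filter.eventually_smallSets.2 ⟨_, Filter.inter_mem
    ((continuous_const_smul a).continuousAt hA) ((continuous_const_smul b).continuousAt hB),
    fun W hW ↦ hAB.mono ?_ ?_⟩
  · exact Set.image_subset_iff.2 (hW.trans Set.inter_subset_left)
  · exact Set.image_subset_iff.2 (hW.trans Set.inter_subset_right)

theorem exists_smul_subset_of_mem_nhds_of_isTopologicalBasis {𝒰 : Set (Set X)}
    (hbasis : TopologicalSpace.IsTopologicalBasis 𝒰) {V : Set X}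
    (htrans : ∀ U ∈ 𝒰, ∃ g : G, g • V = U) {x : X} {W : Set X} (hW : W ∈ 𝓝 x) :
    ∃ g : G, g • V ⊆ W := by
  obtain ⟨U, hU, -, hUW⟩ := hbasis.mem_nhds_iff.1 hW
  obtain ⟨g, rfl⟩ := htrans U hU
  exact ⟨g, hUW⟩

theorem exists_mem_disjoint_smul_of_exists_smul_subset [T2Space X] [ContinuousConstSMul G X]
    {H : Subgroup G} [H.Normal] {a₁ a₂ : G} (ha₁ : a₁ ∈ H) (ha₂ : a₂ ∈ H) {x : X}
    (hx₁ : a₁ • x ≠ x) (hx₂ : a₂ • x ≠ x) (hx₁₂ : a₁ • x ≠ a₂ • x)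
    {V : Set X} (hV : ∀ W ∈ 𝓝 x, ∃ g : G, g • V ⊆ W) :
    ∃ b₁ ∈ H, ∃ b₂ ∈ H,
      Disjoint V (b₁ • V) ∧ Disjoint V (b₂ • V) ∧ Disjoint (b₁ • V) (b₂ • V) := by
  have hone₁ : (1 : G) • x ≠ a₁ • x := by rwa [one_smul, ne_comm]
  have hone₂ : (1 : G) • x ≠ a₂ • x := by rwa [one_smul, ne_comm]
  obtain ⟨W, hWx, hW⟩ := Filter.eventually_smallSets.1
    ((eventually_smallSets_disjoint_smul hone₁).and
      ((eventually_smallSets_disjoint_smul hone₂).and (eventually_smallSets_disjoint_smul hx₁₂)))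
  obtain ⟨g, hgW⟩ := hV W hWx
  obtain ⟨hW₁, hW₂, hW₁₂⟩ := hW _ hgW
  refine ⟨g⁻¹ * a₁ * g, ?_, g⁻¹ * a₂ * g, ?_, ?_, ?_, disjoint_conj_smul_conj_smul hW₁₂⟩
  · exact ‹H.Normal›.conj_mem' _ ha₁ g
  · exact ‹H.Normal›.conj_mem' _ ha₂ g
  · simpa using disjoint_conj_smul_conj_smul hW₁
  · simpa using disjoint_conj_smul_conj_smul hW₂

theorem commutator_eq_commutator_of_normal_subgroup_general [T2Space X] [ContinuousConstSMul G X]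
    [FaithfulSMul G X] {H : Subgroup G} [H.Normal] {α₁ α₂ : G} (hα₁ : α₁ ∈ H) (hα₂ : α₂ ∈ H)
    {x : X} (hx₁ : α₁ • x ≠ x) (hx₂ : α₂ • x ≠ x) (hx₁₂ : α₁ • x ≠ α₂ • x)
    {V : Set X} (hV : ∀ W ∈ 𝓝 x, ∃ g : G, g • V ⊆ W)
    {g₁ g₂ : G} (hg₁ : (fixedBy X g₁)ᶜ ⊆ V) (hg₂ : (fixedBy X g₂)ᶜ ⊆ V) :
    ∃ ρ₁ ∈ H, ∃ ρ₂ ∈ H, ⁅g₁, g₂⁆ = ⁅ρ₁, ρ₂⁆ := by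
  obtain ⟨b₁, hb₁, b₂, hb₂, hV₁, hV₂, hV₁₂⟩ :=
    exists_mem_disjoint_smul_of_exists_smul_subset hα₁ hα₂ hx₁ hx₂ hx₁₂ hV
  exact ⟨⁅g₁, b₁⁆, commutatorElement_mem_of_mem_right g₁ hb₁,
    ⁅g₂, b₂⁆, commutatorElement_mem_of_mem_right g₂ hb₂,
    (commutatorElement_commutatorElement_of_disjoint_smul hg₁ hg₂ hV₁ hV₂ hV₁₂).symm⟩

end Action

/-- Epstein-type commutator lemma: if a group `G` acts faithfully by homeomorphisms on a
compact Hausdorff space `X`, transitively on a basis `𝒰` of open sets, `H` is a nontrivial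
normal subgroup of `G` containing elements `α₁, α₂` such that `x`, `α₁ • x`, `α₂ • x` are
pairwise distinct for some `x`, then for all `g₁, g₂ ∈ G` supported in a common basis set
`V ∈ 𝒰`, the commutator `[g₁, g₂]` equals a commutator `[ρ₁, ρ₂]` of elements of `H`. -/
theorem commutator_eq_commutator_of_normal_subgroup
    {X : Type*} [TopologicalSpace X] [CompactSpace X] [T2Space X]
    {G : Type*} [Group G] [MulAction G X] [FaithfulSMul G X]
    (hcont : ∀ g : G, Continuous fun x : X => g • x)
    (𝒰 : Set (Set X)) (hbasis : TopologicalSpace.IsTopologicalBasis 𝒰)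
    (htrans : ∀ U ∈ 𝒰, ∀ V ∈ 𝒰, ∃ g : G, g • U = V)
    (H : Subgroup G) (hnormal : H.Normal) (hnontriv : H ≠ ⊥)
    (α₁ α₂ : G) (hα₁ : α₁ ∈ H) (hα₂ : α₂ ∈ H) (x : X)
    (hx₁ : α₁ • x ≠ x) (hx₂ : α₂ • x ≠ x) (hx₁₂ : α₁ • x ≠ α₂ • x) :
    ∀ V ∈ 𝒰, ∀ g₁ g₂ : G, {x : X | g₁ • x ≠ x} ⊆ V → {x : X | g₂ • x ≠ x} ⊆ V →
      ∃ ρ₁ ∈ H, ∃ ρ₂ ∈ H, ⁅g₁, g₂⁆ = ⁅ρ₁, ρ₂⁆ := by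
  intro V hV g₁ g₂ hg₁ hg₂
  have : ContinuousConstSMul G X := ⟨hcont⟩
  exact commutator_eq_commutator_of_normal_subgroup_general hα₁ hα₂ hx₁ hx₂ hx₁₂
    (fun _ ↦ exists_smul_subset_of_mem_nhds_of_isTopologicalBasis hbasis (htrans V hV)) hg₁ hg₂
end

section
/- Let q ≥ 2 and let T be a simple graph on an infinite vertex set that is a tree (connected and acyclic) and in which every vertex has degree exactly q+1. Then the subgroup Aut⁺(T) of the automorphism group of T, consisting of those automorphisms φ such that the graph distance between v and φ(v) is even for every vertex v, is a simple group. -/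
/-!
Removing an edge of a tree leaves two half-trees, and an automorphism fixing both ends of the edge
is the product of one fixing the first half-tree pointwise and one fixing the second (Tits'
independence property). It therefore suffices that a nontrivial normal subgroup `N` contains the
pointwise fixator of every half-tree: these fixators make `N` transitive on the edges of each type,
so any automorphism can be corrected by an element of `N` to one that fixes an edge.

Multiplying an element of `N` that moves a vertex by a conjugate of itself gives `h ∈ N` and a
half-tree `B` whose translates `h ^ n • B` are pairwise disjoint. If `g` is supported on `B`, the
infinite product `f` of the conjugates `h ^ n * g * (h ^ n)⁻¹` is again an automorphism, and
`g = ⁅f, h⁆` lies in `N`. So `N` contains the fixator of the half-tree opposite to `B`, and by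
conjugation the fixators of all half-trees.
-/

open Function
open scoped Pointwise commutatorElement

namespace SemiregularTree

section DisjointProduct

variable {α ι : Type*}

open Classical in
/-- The (possibly infinite) product of a family of permutations with pairwise disjoint supports, as
a function: a point moved by some `g i` is sent to its image under `g i`, all others are fixed. -/
noncomputable def disjointProd (g : ι → Equiv.Perm α) (x : α) : α :=
  if h : ∃ i, g i x ≠ x then g h.choose x else x

variable {g : ι → Equiv.Perm α}

theorem disjointProd_of_forall_eq {x : α} (h : ∀ i, g i x = x) : disjointProd g x = x :=
  dif_neg (by simpa using h)

theorem disjointProd_of_ne (hg : Pairwise (Equiv.Perm.Disjoint on g)) {i : ι} {x : α}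
    (h : g i x ≠ x) : disjointProd g x = g i x := by
  have hex : ∃ i, g i x ≠ x := ⟨i, h⟩
  have hi : hex.choose = i := by
    by_contra hne
    exact (hg hne x).elim hex.choose_spec h
  rw [disjointProd, dif_pos hex, hi]

theorem disjointProd_inv_leftInverse (hg : Pairwise (Equiv.Perm.Disjoint on g)) :
    LeftInverse (disjointProd fun i => (g i)⁻¹) (disjointProd g) := by
  intro x
  by_cases hx : ∃ i, g i x ≠ x
  · obtain ⟨i, hi⟩ := hx
    have hg' : Pairwise (Equiv.Perm.Disjoint on fun i => (g i)⁻¹) :=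
      fun i j hij => (hg hij).inv_left.inv_right
    rw [disjointProd_of_ne hg hi, disjointProd_of_ne hg' (i := i)]
    · simp
    · simpa using hi.symm
  · push Not at hx
    rw [disjointProd_of_forall_eq hx,
      disjointProd_of_forall_eq fun i => Equiv.Perm.inv_eq_iff_eq.2 (hx i).symm]

/-- `disjointProd` as a permutation. -/
noncomputable def disjointProdPerm (g : ι → Equiv.Perm α)
    (hg : Pairwise (Equiv.Perm.Disjoint on g)) : Equiv.Perm α where
  toFun := disjointProd g
  invFun := disjointProd fun i => (g i)⁻¹
  left_inv := disjointProd_inv_leftInverse hg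
  right_inv := by
    have h := disjointProd_inv_leftInverse (g := fun i => (g i)⁻¹)
      fun i j hij => (hg hij).inv_left.inv_right
    simp only [inv_inv] at h
    exact h

theorem disjointProd_eq_mul_apply (hg : Pairwise (Equiv.Perm.Disjoint on g)) {i j : ι}
    (hij : i ≠ j) {x : α} (hx : disjointProd g x = g i x) : disjointProd g x = (g i * g j) x := by
  have hj : g j x = x := by
    by_contra hne
    rw [disjointProd_of_ne hg hne, (hg hij x).resolve_right hne] at hx
    exact hne hx
  rw [Equiv.Perm.mul_apply, hj, hx]

theorem exists_mem_closure_eq_disjointProd [Nonempty ι]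
    (hg : Pairwise (Equiv.Perm.Disjoint on g)) (x y : α) :
    ∃ p ∈ Subgroup.closure (Set.range g), p x = disjointProd g x ∧ p y = disjointProd g y := by
  have hlocal (z : α) : ∃ i, disjointProd g z = g i z := by
    by_cases hz : ∃ i, g i z ≠ z
    · exact hz.imp fun i hi => disjointProd_of_ne hg hi
    · push Not at hz
      exact ⟨Classical.arbitrary ι, by rw [disjointProd_of_forall_eq hz, hz]⟩
  have hmem (i : ι) : g i ∈ Subgroup.closure (Set.range g) :=
    Subgroup.subset_closure (Set.mem_range_self i)
  obtain ⟨i, hi⟩ := hlocal x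
  obtain ⟨j, hj⟩ := hlocal y
  rcases eq_or_ne i j with rfl | hij
  · exact ⟨g i, hmem i, hi.symm, hj.symm⟩
  · refine ⟨g i * g j, mul_mem (hmem i) (hmem j), (disjointProd_eq_mul_apply hg hij hi).symm, ?_⟩
    rw [(hg hij).commute.eq, ← disjointProd_eq_mul_apply hg hij.symm hj]

end DisjointProduct

section Displacement

variable {Γ α : Type*} [Group Γ] [MulAction Γ α]

theorem pairwise_disjoint_pow_smul {h : Γ} {B D : Set α} (hBD : B ⊆ D) (hhD : h • D ⊆ D)
    (hhB : Disjoint (h • D) B) : Pairwise (Disjoint on fun n : ℕ => h ^ n • B) := by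
  have hpow (n : ℕ) : h ^ n • D ⊆ D := by
    induction n with
    | zero => simp
    | succ n ih =>
      rw [pow_succ', mul_smul]
      exact (Set.smul_set_mono ih).trans hhD
  rw [pairwise_disjoint_on]
  intro m n hmn
  obtain ⟨d, rfl⟩ := Nat.exists_eq_add_of_lt hmn
  rw [add_assoc, pow_add, mul_smul, Set.disjoint_smul_set, pow_succ', mul_smul]
  exact (hhB.mono_left (Set.smul_set_mono ((Set.smul_set_mono hBD).trans (hpow d)))).symm

variable {g h : Equiv.Perm α} {B : Set α}

theorem pairwise_disjoint_conj_pow (hgB : ∀ x ∉ B, g x = x)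
    (hB : Pairwise (Disjoint on fun n : ℕ => h ^ n • B)) :
    Pairwise (Equiv.Perm.Disjoint on fun n : ℕ => h ^ n * g * (h ^ n)⁻¹) := by
  have hsupp (n : ℕ) (x : α) (hx : x ∉ h ^ n • B) : (h ^ n * g * (h ^ n)⁻¹) x = x := by
    rw [Set.mem_smul_set_iff_inv_smul_mem, Equiv.Perm.smul_def] at hx
    rw [Equiv.Perm.mul_apply, Equiv.Perm.mul_apply, hgB _ hx]
    exact (h ^ n).apply_symm_apply x
  intro m n hmn x
  by_cases hx : x ∈ h ^ m • B
  · exact Or.inr (hsupp n x (Set.disjoint_left.1 (hB hmn) hx))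
  · exact Or.inl (hsupp m x hx)

theorem apply_conj_disjointProd {c : ℕ → Equiv.Perm α} (hc : Pairwise (Equiv.Perm.Disjoint on c))
    (hshift : ∀ n, h * c n * h⁻¹ = c (n + 1)) (x : α) :
    c 0 (h (disjointProd c (h⁻¹ x))) = disjointProd c x := by
  have hshift_apply (n : ℕ) : h (c n (h⁻¹ x)) = c (n + 1) x := by rw [← hshift]; rfl
  have hfix {n : ℕ} (hn : c (n + 1) x = x) : c n (h⁻¹ x) = h⁻¹ x := by
    rw [Equiv.Perm.eq_inv_iff_eq, hshift_apply, hn]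
  by_cases hx : ∃ n, c (n + 1) x ≠ x
  · obtain ⟨n, hn⟩ := hx
    have hmove : c n (h⁻¹ x) ≠ h⁻¹ x := by
      rwa [Ne, Equiv.Perm.eq_inv_iff_eq, hshift_apply]
    rw [disjointProd_of_ne hc hmove, disjointProd_of_ne hc hn, hshift_apply]
    exact (hc n.succ_ne_zero.symm _).resolve_right fun h => hn ((c (n + 1)).injective h)
  · push Not at hx
    have hinv : h (h⁻¹ x) = x := h.apply_symm_apply x
    rw [disjointProd_of_forall_eq fun n => hfix (hx n), hinv]
    by_cases h0 : c 0 x = x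
    · rw [h0, disjointProd_of_forall_eq (Nat.rec h0 fun n _ => hx n)]
    · rw [disjointProd_of_ne hc h0]

/-- With `f` the product of the conjugates `h ^ n * g * (h ^ n)⁻¹`, conjugating `f` by `h` removes
the factor `g`. -/
theorem exists_commutatorElement_eq (hgB : ∀ x ∉ B, g x = x)
    (hB : Pairwise (Disjoint on fun n : ℕ => h ^ n • B)) :
    ∃ f : Equiv.Perm α, ⁅f, h⁆ = g ∧
      ∀ x y, ∃ p ∈ Subgroup.closure {g, h}, p x = f x ∧ p y = f y := by
  set c : ℕ → Equiv.Perm α := fun n => h ^ n * g * (h ^ n)⁻¹ with hc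
  have hdisj : Pairwise (Equiv.Perm.Disjoint on c) := pairwise_disjoint_conj_pow hgB hB
  have hshift (n : ℕ) : h * c n * h⁻¹ = c (n + 1) := by simp only [hc, pow_succ']; group
  refine ⟨disjointProdPerm c hdisj, ?_, fun x y => ?_⟩
  · have hc0 : c 0 = g := by simp [hc]
    have hprod : g * (h * disjointProdPerm c hdisj * h⁻¹) = disjointProdPerm c hdisj := by
      rw [← hc0]
      exact Equiv.ext (apply_conj_disjointProd hdisj hshift)
    rw [eq_mul_inv_of_mul_eq hprod, commutatorElement_def]
    group
  · obtain ⟨p, hp, hpxy⟩ := exists_mem_closure_eq_disjointProd hdisj x y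
    refine ⟨p, (Subgroup.closure_le _).2 ?_ hp, hpxy⟩
    rintro _ ⟨n, rfl⟩
    have hg : g ∈ Subgroup.closure {g, h} := Subgroup.subset_closure (by simp)
    have hh : h ∈ Subgroup.closure {g, h} := Subgroup.subset_closure (by simp)
    exact mul_mem (mul_mem (pow_mem hh n) hg) (inv_mem (pow_mem hh n))

end Displacement

section HalfTree

variable {V : Type*} {G : SimpleGraph V} {u v w x y r : V}

/-- The half-tree on the side of `v` of the edge `uv`: the vertices closer to `v` than to `u`.
It is meant for adjacent `u`, `v`. -/
def halfTree (G : SimpleGraph V) (u v : V) : Set V :=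
  {x | G.dist x v < G.dist x u}

theorem left_notMem_halfTree : u ∉ halfTree G u v := by
  simp [halfTree]

theorem right_mem_halfTree (huv : G.Adj u v) : v ∈ halfTree G u v := by
  simp [halfTree, SimpleGraph.dist_eq_one_iff_adj.2 huv.symm]

theorem mem_halfTree_iff (hT : G.IsTree) (huv : G.Adj u v) :
    x ∈ halfTree G u v ↔ G.dist x u = G.dist x v + 1 := by
  have := hT.dist_eq_dist_add_one_of_adj x huv
  rw [halfTree, Set.mem_ofPred_eq]
  omega

theorem compl_halfTree (hT : G.IsTree) (huv : G.Adj u v) :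
    (halfTree G u v)ᶜ = halfTree G v u := by
  ext x
  have := hT.dist_eq_dist_add_one_of_adj x huv
  rw [Set.mem_compl_iff, mem_halfTree_iff hT huv, mem_halfTree_iff hT huv.symm]
  omega

theorem disjoint_halfTree (hT : G.IsTree) (huv : G.Adj u v) (huw : G.Adj u w) (hvw : v ≠ w) :
    Disjoint (halfTree G u v) (halfTree G u w) := by
  have isPath_cons {z x : V} (huz : G.Adj u z) (hx : x ∈ halfTree G u z) {p : G.Walk z x}
      (hp : p.length = G.dist z x) : (p.cons huz).IsPath := by
    apply SimpleGraph.Walk.isPath_of_length_eq_dist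
    rw [SimpleGraph.Walk.length_cons, hp, SimpleGraph.dist_comm, SimpleGraph.dist_comm (u := u),
      (mem_halfTree_iff hT huz).1 hx]
  refine Set.disjoint_left.2 fun x hxv hxw => hvw ?_
  obtain ⟨p, hp⟩ := hT.connected.exists_walk_length_eq_dist v x
  obtain ⟨q, hq⟩ := hT.connected.exists_walk_length_eq_dist w x
  have hpq := (hT.isAcyclic.subsingleton_path u x).elim
    ⟨_, isPath_cons huv hxv hp⟩ ⟨_, isPath_cons huw hxw hq⟩
  simpa using congrArg (fun p : G.Path u x => p.1.snd) hpq

theorem halfTree_subset_halfTree_of_ne (hT : G.IsTree) (huv : G.Adj u v) (hvw : G.Adj v w)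
    (huw : u ≠ w) : halfTree G v w ⊆ halfTree G u v := by
  rw [← compl_halfTree hT huv.symm]
  exact (disjoint_halfTree hT hvw huv.symm huw.symm).subset_compl_right

open Classical in
/-- The neighbour of `x` on the geodesic from `x` to `r`, and `x` itself if `x = r`. -/
noncomputable def toward (G : SimpleGraph V) (x r : V) : V :=
  if h : ∃ p, G.Adj x p ∧ r ∈ halfTree G x p then h.choose else x

theorem exists_adj_mem_halfTree (hT : G.IsTree) (hxr : x ≠ r) :
    ∃ p, G.Adj x p ∧ r ∈ halfTree G x p := by
  obtain ⟨walk, hwalk⟩ := hT.connected.exists_walk_length_eq_dist x r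
  cases walk with
  | nil => exact absurd rfl hxr
  | cons hadj tail =>
    refine ⟨_, hadj, ?_⟩
    have := SimpleGraph.dist_le tail
    rw [SimpleGraph.Walk.length_cons] at hwalk
    rw [halfTree, Set.mem_ofPred_eq, SimpleGraph.dist_comm, SimpleGraph.dist_comm (v := x)]
    omega

theorem adj_toward (hT : G.IsTree) (hxr : x ≠ r) : G.Adj x (toward G x r) := by
  rw [toward, dif_pos (exists_adj_mem_halfTree hT hxr)]
  exact (exists_adj_mem_halfTree hT hxr).choose_spec.1

theorem mem_halfTree_toward (hT : G.IsTree) (hxr : x ≠ r) : r ∈ halfTree G x (toward G x r) := by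
  rw [toward, dif_pos (exists_adj_mem_halfTree hT hxr)]
  exact (exists_adj_mem_halfTree hT hxr).choose_spec.2

theorem dist_eq_dist_toward_add_one (hT : G.IsTree) (hxr : x ≠ r) :
    G.dist r x = G.dist r (toward G x r) + 1 :=
  (mem_halfTree_iff hT (adj_toward hT hxr)).1 (mem_halfTree_toward hT hxr)

theorem toward_eq_of_dist_eq (hT : G.IsTree) (hxy : G.Adj x y)
    (hr : G.dist r x = G.dist r y + 1) : toward G x r = y := by
  have hxr : x ≠ r := by
    rintro rfl
    simp at hr
  by_contra hne
  exact Set.disjoint_left.1 (disjoint_halfTree hT (adj_toward hT hxr) hxy hne)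
    (mem_halfTree_toward hT hxr) ((mem_halfTree_iff hT hxy).2 hr)

theorem toward_induction (hT : G.IsTree) (r : V) {P : V → Prop} (root : P r)
    (step : ∀ x, x ≠ r → P (toward G x r) → P x) (x : V) : P x := by
  induction hn : G.dist r x generalizing x with
  | zero => rwa [← hT.connected.dist_eq_zero_iff.1 hn]
  | succ n ih =>
    have hxr : x ≠ r := by
      rintro rfl
      simp at hn
    exact step x hxr (ih _ (by have := dist_eq_dist_toward_add_one hT hxr; omega))

theorem even_dist_iff (hT : G.IsTree) (x y z : V) :
    Even (G.dist x z) ↔ (Even (G.dist x y) ↔ Even (G.dist y z)) := by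
  induction z using toward_induction hT y with
  | root => simp
  | step z hz ih =>
    have h₁ := dist_eq_dist_toward_add_one hT hz
    have h₂ := hT.dist_eq_dist_add_one_of_adj x (adj_toward hT hz)
    grind

theorem dist_eq_add_of_mem_halfTree (hT : G.IsTree) (huv : G.Adj u v) (hx : x ∈ halfTree G u v)
    (hy : y ∈ halfTree G v u) : G.dist x y = G.dist x v + G.dist v y := by
  suffices x ∈ halfTree G y (toward G y v) ∧ G.dist x y = G.dist x v + G.dist v y from this.2
  induction y using toward_induction hT u with
  | root =>
    have huv_dist : G.dist v u = 1 := SimpleGraph.dist_eq_one_iff_adj.2 huv.symm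
    rw [toward_eq_of_dist_eq hT huv (by simpa using huv_dist), huv_dist]
    exact ⟨hx, (mem_halfTree_iff hT huv).1 hx⟩
  | step y hyu ih =>
    set z := toward G y u
    have hyz : G.Adj y z := adj_toward hT hyu
    have hyu_dist := dist_eq_dist_toward_add_one hT hyu
    have hyv_dist := (mem_halfTree_iff hT huv.symm).1 hy
    have hz : z ∈ halfTree G v u := by
      have := hT.dist_eq_dist_add_one_of_adj v hyz
      rw [halfTree, Set.mem_ofPred_eq]
      grind [SimpleGraph.dist_comm]
    have hvy_dist : G.dist v y = G.dist v z + 1 := by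
      have := (mem_halfTree_iff hT huv.symm).1 hz
      grind [SimpleGraph.dist_comm]
    have hzv : z ≠ v := by
      rintro hzv
      exact left_notMem_halfTree (hzv ▸ hz)
    have hy_ne : y ≠ toward G z v := by
      intro hy_eq
      have := dist_eq_dist_toward_add_one hT hzv
      rw [← hy_eq] at this
      omega
    have hxy := halfTree_subset_halfTree_of_ne hT hyz (adj_toward hT hzv) hy_ne (ih hz).1
    rw [toward_eq_of_dist_eq hT hyz hvy_dist]
    exact ⟨hxy, by rw [(mem_halfTree_iff hT hyz).1 hxy, (ih hz).2, hvy_dist, add_assoc]⟩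

theorem eq_of_adj_of_mem_halfTree (hT : G.IsTree) (huv : G.Adj u v) (hx : x ∈ halfTree G u v)
    (hy : y ∈ halfTree G v u) (hxy : G.Adj x y) : x = v ∧ y = u := by
  have hxyd := dist_eq_add_of_mem_halfTree hT huv hx hy
  rw [SimpleGraph.dist_eq_one_iff_adj.2 hxy, SimpleGraph.dist_comm (u := v),
    (mem_halfTree_iff hT huv.symm).1 hy] at hxyd
  constructor <;> rw [← hT.connected.dist_eq_zero_iff] <;> omega

theorem halfTree_subset_halfTree (hT : G.IsTree) {v p w s : V} (hvp : G.Adj v p) (hws : G.Adj w s)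
    (hw : w ∈ halfTree G v p) (hv : v ∈ halfTree G s w) : halfTree G w s ⊆ halfTree G v p := by
  intro x hx
  by_contra hxp
  rw [← Set.mem_compl_iff, compl_halfTree hT hvp] at hxp
  have h₁ := dist_eq_add_of_mem_halfTree hT hvp.symm hxp hw
  have h₂ := dist_eq_add_of_mem_halfTree hT hws hx hv
  have h₃ := (mem_halfTree_iff hT hws).1 hx
  have h₄ := (mem_halfTree_iff hT hws.symm).1 hv
  have h₅ := (mem_halfTree_iff hT hvp).1 hw
  rw [SimpleGraph.dist_comm (u := s)] at h₂
  rw [SimpleGraph.dist_comm (u := w)] at h₅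
  omega

end HalfTree

section TypePreservingAut
variable {V : Type*} {G : SimpleGraph V}

theorem dist_hom_le {V' : Type*} {G' : SimpleGraph V'} (hG : G.Connected) (f : G →g G') (x y : V) :
    G'.dist (f x) (f y) ≤ G.dist x y := by
  obtain ⟨p, hp⟩ := hG.exists_walk_length_eq_dist x y
  rw [← hp, ← SimpleGraph.Walk.length_map f p]
  exact SimpleGraph.dist_le _

theorem dist_iso {V' : Type*} {G' : SimpleGraph V'} (hG : G.Connected) (f : G ≃g G') (x y : V) :
    G'.dist (f x) (f y) = G.dist x y := by
  refine (dist_hom_le hG f.toHom x y).antisymm ?_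
  simpa using dist_hom_le (f.connected_iff.1 hG) f.symm.toHom (f x) (f y)

theorem dist_apply_apply (hG : G.Connected) {φ : Equiv.Perm V}
    (hφ : ∀ v w, G.Adj (φ v) (φ w) ↔ G.Adj v w) (x y : V) : G.dist (φ x) (φ y) = G.dist x y :=
  dist_iso hG (⟨φ, hφ _ _⟩ : G ≃g G) x y

/-- The group `Aut⁺(T)` of type-preserving automorphisms of a tree `T`, as a group of permutations
of the vertices. -/
def typePreservingAut (hT : G.IsTree) : Subgroup (Equiv.Perm V) where
  carrier := {φ | (∀ v w, G.Adj (φ v) (φ w) ↔ G.Adj v w) ∧ ∀ v, Even (G.dist v (φ v))}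
  one_mem' := by simp
  mul_mem' {φ ψ} hφ hψ := by
    refine ⟨fun v w => (hφ.1 _ _).trans (hψ.1 v w), fun v => ?_⟩
    exact (even_dist_iff hT v (ψ v) _).2 (iff_of_true (hψ.2 v) (hφ.2 (ψ v)))
  inv_mem' {φ} hφ := by
    have happly (v : V) : φ (φ⁻¹ v) = v := φ.apply_symm_apply v
    refine ⟨fun v w => ?_, fun v => ?_⟩
    · rw [← hφ.1, happly, happly]
    · rw [SimpleGraph.dist_comm]
      simpa only [happly] using hφ.2 (φ⁻¹ v)

variable (hT : G.IsTree)

theorem mem_typePreservingAut_of_apply_eq_self {φ : Equiv.Perm V}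
    (hφ : ∀ v w, G.Adj (φ v) (φ w) ↔ G.Adj v w) {r : V} (hr : φ r = r) :
    φ ∈ typePreservingAut hT := by
  refine ⟨hφ, fun v => (even_dist_iff hT v r _).2 ?_⟩
  have hdist := dist_apply_apply hT.connected hφ v r
  rw [hr] at hdist
  rw [SimpleGraph.dist_comm (u := r), hdist]

theorem mem_typePreservingAut_of_forall_pair {φ : Equiv.Perm V}
    (hφ : ∀ x y, ∃ ψ ∈ typePreservingAut hT, ψ x = φ x ∧ ψ y = φ y) :
    φ ∈ typePreservingAut hT := by
  refine ⟨fun x y => ?_, fun x => ?_⟩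
  · obtain ⟨ψ, hψ, hx, hy⟩ := hφ x y
    rw [← hx, ← hy, hψ.1]
  · obtain ⟨ψ, hψ, hx, -⟩ := hφ x x
    exact hx ▸ hψ.2 x

variable {hT}

theorem adj_smul_smul_iff (g : typePreservingAut hT) {x y : V} :
    G.Adj (g • x) (g • y) ↔ G.Adj x y :=
  g.2.1 x y

theorem even_dist_smul (g : typePreservingAut hT) (x : V) : Even (G.dist x (g • x)) :=
  g.2.2 x

theorem smul_halfTree (g : typePreservingAut hT) (u v : V) :
    g • halfTree G u v = halfTree G (g • u) (g • v) := by
  ext x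
  obtain ⟨y, rfl⟩ := MulAction.surjective g x
  have hdist (z : V) : G.dist (g • y) (g • z) = G.dist y z :=
    dist_apply_apply hT.connected g.2.1 y z
  rw [Set.smul_mem_smul_set_iff]
  simp only [halfTree, Set.mem_ofPred_eq, hdist]

/-- Tits' independence property. -/
theorem exists_mem_fixingSubgroup_halfTree_eqOn {g : typePreservingAut hT} {u v : V}
    (huv : G.Adj u v) (hu : g • u = u) (hv : g • v = v) :
    ∃ g₁ ∈ fixingSubgroup (typePreservingAut hT) (halfTree G u v),
      ∀ x ∈ halfTree G v u, g₁ • x = g • x := by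
  classical
  have hinv (x : V) : g • x ∈ halfTree G v u ↔ x ∈ halfTree G v u := by
    rw [← Set.smul_mem_smul_set_iff (a := g) (x := x), smul_halfTree, hu, hv]
  set φ : Equiv.Perm V :=
    Equiv.Perm.ofSubtype ((g : Equiv.Perm V).subtypePerm (p := (· ∈ halfTree G v u)) hinv)
  have hφ_mem {x : V} (hx : x ∈ halfTree G v u) : φ x = g • x :=
    Equiv.Perm.ofSubtype_apply_of_mem _ hx
  have hφ_notMem {x : V} (hx : x ∉ halfTree G v u) : φ x = x :=
    Equiv.Perm.ofSubtype_apply_of_not_mem _ hx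
  have hcross {x y : V} (hx : x ∈ halfTree G v u) (hy : y ∉ halfTree G v u) :
      G.Adj (g • x) y ↔ G.Adj x y := by
    rw [← Set.mem_compl_iff, compl_halfTree hT huv.symm] at hy
    constructor <;> intro hxy
    · obtain ⟨-, hyv⟩ := eq_of_adj_of_mem_halfTree hT huv.symm ((hinv x).2 hx) hy hxy
      rwa [hyv, ← adj_smul_smul_iff g, hv, ← hyv]
    · obtain ⟨rfl, rfl⟩ := eq_of_adj_of_mem_halfTree hT huv.symm hx hy hxy
      rwa [hu]
  have hφ_adj (x y : V) : G.Adj (φ x) (φ y) ↔ G.Adj x y := by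
    by_cases hx : x ∈ halfTree G v u <;> by_cases hy : y ∈ halfTree G v u
    · rw [hφ_mem hx, hφ_mem hy, adj_smul_smul_iff]
    · rw [hφ_mem hx, hφ_notMem hy, hcross hx hy]
    · rw [hφ_notMem hx, hφ_mem hy, G.adj_comm, hcross hy hx, G.adj_comm]
    · rw [hφ_notMem hx, hφ_notMem hy]
  refine ⟨⟨φ, mem_typePreservingAut_of_apply_eq_self hT hφ_adj (hφ_notMem left_notMem_halfTree)⟩,
    fun ⟨x, hx⟩ => hφ_notMem ?_, fun x => hφ_mem⟩
  rwa [← Set.mem_compl_iff, compl_halfTree hT huv.symm]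

theorem mem_sup_fixingSubgroup_halfTree {g : typePreservingAut hT} {u v : V}
    (huv : G.Adj u v) (hu : g • u = u) (hv : g • v = v) :
    g ∈ fixingSubgroup (typePreservingAut hT) (halfTree G u v) ⊔
      fixingSubgroup (typePreservingAut hT) (halfTree G v u) := by
  obtain ⟨g₁, hg₁, hg₁_eq⟩ := exists_mem_fixingSubgroup_halfTree_eqOn huv hu hv
  rw [← mul_inv_cancel_left g₁ g]
  refine Subgroup.mul_mem_sup hg₁ ((mem_fixingSubgroup_iff _).2 fun x hx => ?_)
  rw [mul_smul, ← hg₁_eq x hx, inv_smul_smul]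

end TypePreservingAut

section Extension

variable {V : Type*} {G : SimpleGraph V} {r x y : V} {E : V → V → V → V}

/-- The self-map of the vertices of a tree obtained by fixing `r` and propagating outwards: if `x`
has been sent to `y`, then the neighbours of `x` farther from `r` are sent to the neighbours of `y`
by `E x y`. -/
noncomputable def extendFrom (G : SimpleGraph V) (r : V) (E : V → V → V → V) (x : V) : V :=
  if _ : G.dist r (toward G x r) < G.dist r x then
    E (toward G x r) (extendFrom G r E (toward G x r)) x
  else r
termination_by G.dist r x

theorem extendFrom_root : extendFrom G r E r = r := by
  simp [extendFrom]

theorem extendFrom_of_ne (hT : G.IsTree) (hxr : x ≠ r) :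
    extendFrom G r E x = E (toward G x r) (extendFrom G r E (toward G x r)) x := by
  rw [extendFrom, dif_pos (by have := dist_eq_dist_toward_add_one hT hxr; omega)]

/-- Local data for building an automorphism of a tree fixing `r`: bijections between the
neighbourhoods of any two vertices at the same distance from `r`, respecting the neighbours that
point back to `r`. -/
structure IsRootedLocalData (G : SimpleGraph V) (r : V) (E : V → V → V → V) : Prop where
  bijOn : ∀ ⦃x y⦄, G.dist r x = G.dist r y → Set.BijOn (E x y) (G.neighborSet x) (G.neighborSet y)
  apply_toward : ∀ ⦃x y⦄, x ≠ r → G.dist r x = G.dist r y → E x y (toward G x r) = toward G y r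

variable (hT : G.IsTree) (hE : IsRootedLocalData G r E)
include hT hE

theorem dist_extendFrom (x : V) : G.dist r (extendFrom G r E x) = G.dist r x := by
  induction x using toward_induction hT r with
  | root => rw [extendFrom_root]
  | step x hxr ih =>
    set p := toward G x r
    have hxp_dist : G.dist r x = G.dist r p + 1 := dist_eq_dist_toward_add_one hT hxr
    have hbij := hE.bijOn ih.symm
    have hxp : x ∈ G.neighborSet p := (adj_toward hT hxr).symm
    have hadj : G.Adj (extendFrom G r E p) (extendFrom G r E x) := by
      rw [extendFrom_of_ne hT hxr]
      exact hbij.mapsTo hxp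
    rcases hT.dist_eq_dist_add_one_of_adj r hadj with hcloser | hfarther
    · have hpr : p ≠ r := by
        intro hpr
        rw [ih, hpr, SimpleGraph.dist_self] at hcloser
        omega
      have hx_eq : x = toward G p r := by
        refine hbij.injOn hxp (adj_toward hT hpr) ?_
        rw [hE.apply_toward hpr ih.symm, toward_eq_of_dist_eq hT hadj hcloser,
          extendFrom_of_ne hT hxr]
      have := dist_eq_dist_toward_add_one hT hpr
      rw [← hx_eq] at this
      omega
    · omega

theorem toward_extendFrom (hxr : x ≠ r) :
    toward G (extendFrom G r E x) r = extendFrom G r E (toward G x r) := by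
  refine toward_eq_of_dist_eq hT ?_ ?_
  · nth_rw 1 [extendFrom_of_ne hT hxr]
    exact ((hE.bijOn (dist_extendFrom hT hE _).symm).mapsTo (adj_toward hT hxr).symm).symm
  · rw [dist_extendFrom hT hE, dist_extendFrom hT hE, dist_eq_dist_toward_add_one hT hxr]

theorem extendFrom_eq_of_adj (hxy : G.Adj x y) :
    extendFrom G r E y = E x (extendFrom G r E x) y := by
  rcases hT.dist_eq_dist_add_one_of_adj r hxy with hcloser | hfarther
  · have hxr : x ≠ r := by
      rintro rfl
      simp at hcloser
    rw [← toward_eq_of_dist_eq hT hxy hcloser, ← toward_extendFrom hT hE hxr,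
      hE.apply_toward hxr (dist_extendFrom hT hE x).symm]
  · have hyr : y ≠ r := by
      rintro rfl
      simp at hfarther
    rw [extendFrom_of_ne hT hyr, toward_eq_of_dist_eq hT hxy.symm hfarther]

theorem extendFrom_injective : Injective (extendFrom G r E) := by
  intro x
  induction x using toward_induction hT r with
  | root =>
    intro y hxy
    rw [← hT.connected.dist_eq_zero_iff, ← dist_extendFrom hT hE, ← hxy, extendFrom_root,
      SimpleGraph.dist_self]
  | step x hxr ih =>
    intro y hxy
    have hyr : y ≠ r := by
      rintro rfl
      have hdist := dist_extendFrom hT hE x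
      rw [hxy, extendFrom_root, SimpleGraph.dist_self, eq_comm,
        hT.connected.dist_eq_zero_iff] at hdist
      exact hxr hdist.symm
    have htoward : toward G x r = toward G y r := by
      apply ih
      rw [← toward_extendFrom hT hE hxr, ← toward_extendFrom hT hE hyr, hxy]
    refine (hE.bijOn (dist_extendFrom hT hE (toward G x r)).symm).injOn (adj_toward hT hxr).symm
      (htoward ▸ (adj_toward hT hyr).symm) ?_
    rw [← extendFrom_of_ne (E := E) hT hxr, hxy, htoward, ← extendFrom_of_ne (E := E) hT hyr]

theorem extendFrom_surjective : Surjective (extendFrom G r E) := by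
  intro y
  induction y using toward_induction hT r with
  | root => exact ⟨r, extendFrom_root⟩
  | step y hyr ih =>
    obtain ⟨x, hx⟩ := ih
    have hy : y ∈ G.neighborSet (extendFrom G r E x) := hx ▸ (adj_toward hT hyr).symm
    obtain ⟨w, hxw, rfl⟩ := (hE.bijOn (dist_extendFrom hT hE x).symm).surjOn hy
    exact ⟨w, extendFrom_eq_of_adj hT hE hxw⟩

theorem adj_extendFrom_iff :
    G.Adj (extendFrom G r E x) (extendFrom G r E y) ↔ G.Adj x y := by
  have hbij := hE.bijOn (dist_extendFrom hT hE x).symm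
  refine ⟨fun hxy => ?_, fun hxy => ?_⟩
  · obtain ⟨w, hxw, hw⟩ := hbij.surjOn hxy
    rw [← extendFrom_eq_of_adj hT hE hxw] at hw
    exact extendFrom_injective hT hE hw ▸ hxw
  · rw [extendFrom_eq_of_adj hT hE hxy]
    exact hbij.mapsTo hxy

theorem exists_typePreservingAut_of_isRootedLocalData :
    ∃ k : typePreservingAut hT, k • r = r ∧ ∀ x, G.Adj r x → k • x = E r r x := by
  let φ : Equiv.Perm V :=
    Equiv.ofBijective _ ⟨extendFrom_injective hT hE, extendFrom_surjective hT hE⟩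
  refine ⟨⟨φ, mem_typePreservingAut_of_apply_eq_self hT (fun x y => adj_extendFrom_iff hT hE)
    extendFrom_root⟩, extendFrom_root, fun x hx => ?_⟩
  exact (extendFrom_eq_of_adj hT hE hx).trans (by rw [extendFrom_root])

end Extension

section LocalTransitivity

theorem exists_bijOn_apply_eq {α β : Type*} {s : Set α} {t : Set β} (e : s ≃ t)
    {a : α} {b : β} (ha : a ∈ s) (hb : b ∈ t) : ∃ f : α → β, Set.BijOn f s t ∧ f a = b := by
  classical
  let e' : s ≃ t := e.trans (Equiv.swap (e ⟨a, ha⟩) ⟨b, hb⟩)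
  let f : α → β := fun x => if h : x ∈ s then e' ⟨x, h⟩ else b
  have hf (x : s) : f x = e' x := dif_pos x.2
  refine ⟨f, ⟨fun x hx => ?_, fun x hx y hy hxy => ?_, fun y hy => ?_⟩, ?_⟩
  · exact hf ⟨x, hx⟩ ▸ (e' _).2
  · rw [hf ⟨x, hx⟩, hf ⟨y, hy⟩] at hxy
    exact congrArg Subtype.val (e'.injective (Subtype.ext hxy))
  · exact ⟨e'.symm ⟨y, hy⟩, Subtype.prop _, by rw [hf, e'.apply_symm_apply]⟩
  · rw [hf ⟨a, ha⟩]
    simp [e']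

/-- A graph in which any two vertices at even distance have equally many neighbours, possibly
infinitely many. For trees this means that the degree depends only on the type of the vertex. -/
def IsSemiregular {V : Type*} (G : SimpleGraph V) : Prop :=
  ∀ v w, Even (G.dist v w) → Nonempty (G.neighborSet v ≃ G.neighborSet w)

variable {V : Type*} {G : SimpleGraph V} {hT : G.IsTree}

theorem exists_isRootedLocalData (hT : G.IsTree) (hG : IsSemiregular G) (r : V) {σ : V → V}
    (hσ : Set.BijOn σ (G.neighborSet r) (G.neighborSet r)) :
    ∃ E, IsRootedLocalData G r E ∧ E r r = σ := by
  have hlocal (x y : V) : ∃ e : V → V, G.dist r x = G.dist r y →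
      Set.BijOn e (G.neighborSet x) (G.neighborSet y) ∧
        (x ≠ r → e (toward G x r) = toward G y r) ∧ (x = r → e = σ) := by
    by_cases hxy : G.dist r x = G.dist r y
    · rcases eq_or_ne x r with rfl | hxr
      · obtain rfl : x = y := by
          rwa [SimpleGraph.dist_self, eq_comm, hT.connected.dist_eq_zero_iff] at hxy
        exact ⟨σ, fun _ => ⟨hσ, by simp⟩⟩
      · have hyr : y ≠ r := by
          rintro rfl
          simp only [SimpleGraph.dist_self, hT.connected.dist_eq_zero_iff] at hxy
          exact hxr hxy.symm
        obtain ⟨e⟩ := hG x y ((even_dist_iff hT x r y).2 (by rw [SimpleGraph.dist_comm, hxy]))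
        obtain ⟨f, hf, hf_toward⟩ := exists_bijOn_apply_eq e (adj_toward hT hxr) (adj_toward hT hyr)
        exact ⟨f, fun _ => ⟨hf, fun _ => hf_toward, fun h => absurd h hxr⟩⟩
    · exact ⟨id, fun h => absurd h hxy⟩
  choose E hE using hlocal
  exact ⟨E, ⟨fun x y hxy => (hE x y hxy).1, fun x y hxr hxy => (hE x y hxy).2.1 hxr⟩,
    (hE r r rfl).2.2 rfl⟩

theorem exists_mem_fixingSubgroup_halfTree_smul_eq (hG : IsSemiregular G) {v a b c : V}
    (ha : G.Adj v a) (hb : G.Adj v b) (hc : G.Adj v c) (hac : a ≠ c) (hbc : b ≠ c) :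
    ∃ k ∈ fixingSubgroup (typePreservingAut hT) (halfTree G v c), k • v = v ∧ k • a = b := by
  classical
  have hswap : Set.BijOn (Equiv.swap a b) (G.neighborSet v) (G.neighborSet v) :=
    Equiv.swap_bijOn_self (iff_of_true ha hb)
  obtain ⟨E, hE, hE_root⟩ := exists_isRootedLocalData hT hG v hswap
  obtain ⟨g, hgv, hg⟩ := exists_typePreservingAut_of_isRootedLocalData hT hE
  rw [hE_root] at hg
  have hgc : g • c = c := by rw [hg c hc, Equiv.swap_apply_of_ne_of_ne hac.symm hbc.symm]
  obtain ⟨k, hk, hk_eq⟩ := exists_mem_fixingSubgroup_halfTree_eqOn hc hgv hgc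
  refine ⟨k, hk, ?_, ?_⟩
  · rw [hk_eq v (right_mem_halfTree hc.symm), hgv]
  · have ha_mem : a ∈ halfTree G c v :=
      halfTree_subset_halfTree_of_ne hT hc.symm ha hac.symm (right_mem_halfTree ha)
    rw [hk_eq a ha_mem, hg a ha, Equiv.swap_apply_left]

end LocalTransitivity

section EdgeTransitivity

variable {V : Type*} {G : SimpleGraph V} {hT : G.IsTree}

theorem exists_adj_ne_ne {v : V} (hv : 3 ≤ (G.neighborSet v).encard) (a b : V) :
    ∃ c, G.Adj v c ∧ c ≠ a ∧ c ≠ b := by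
  by_contra! h
  have hsubset : G.neighborSet v ⊆ {a, b} := fun c hc => or_iff_not_imp_left.2 (h c hc)
  have hcard : (3 : ℕ∞) ≤ 2 := calc
    3 ≤ (G.neighborSet v).encard := hv
    _ ≤ ({a, b} : Set V).encard := Set.encard_le_encard hsubset
    _ ≤ ({b} : Set V).encard + 1 := Set.encard_insert_le {b} a
    _ = 2 := by rw [Set.encard_singleton, one_add_one_eq_two]
  exact absurd hcard (by decide)

/-- A group of automorphisms is locally transitive if every vertex stabilizer is transitive on the
neighbours of the vertex. -/
def IsLocallyTransitive (S : Subgroup (typePreservingAut hT)) : Prop :=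
  ∀ ⦃v a b⦄, G.Adj v a → G.Adj v b → ∃ k ∈ S, k • v = v ∧ k • a = b

theorem isLocallyTransitive_of_fixingSubgroup_halfTree_le (hG : IsSemiregular G)
    (hthick : ∀ v, 3 ≤ (G.neighborSet v).encard) {S : Subgroup (typePreservingAut hT)}
    (hS : ∀ ⦃u v⦄, G.Adj u v → fixingSubgroup (typePreservingAut hT) (halfTree G u v) ≤ S) :
    IsLocallyTransitive S := by
  intro v a b ha hb
  obtain ⟨c, hc, hca, hcb⟩ := exists_adj_ne_ne (hthick v) a b
  obtain ⟨k, hk, hkv, hka⟩ :=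
    exists_mem_fixingSubgroup_halfTree_smul_eq (hT := hT) hG ha hb hc hca.symm hcb.symm
  exact ⟨k, hS hc hk, hkv, hka⟩

namespace IsLocallyTransitive

variable {S : Subgroup (typePreservingAut hT)} {u v u' v' : V}

theorem exists_smul_eq (hS : IsLocallyTransitive S) (h : Even (G.dist u' u)) :
    ∃ k ∈ S, k • u = u' := by
  induction hn : G.dist u' u using Nat.strong_induction_on generalizing u with
  | _ n ih =>
    rcases eq_or_ne u u' with rfl | hu
    · exact ⟨1, one_mem S, one_smul _ u⟩
    · set p := toward G u u'
      have hu_dist : G.dist u' u = G.dist u' p + 1 := dist_eq_dist_toward_add_one hT hu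
      have hp : p ≠ u' := by
        intro hp
        rw [hu_dist, hp, SimpleGraph.dist_self] at h
        simp at h
      have hp_dist := dist_eq_dist_toward_add_one hT hp
      obtain ⟨k, hk, -, hku⟩ := hS (adj_toward hT hu).symm (adj_toward hT hp)
      obtain ⟨l, hl, hlk⟩ := ih _ (by omega) (by grind) (u := toward G p u') rfl
      exact ⟨l * k, mul_mem hl hk, by rw [mul_smul, hku, hlk]⟩

theorem exists_smul_eq_and_smul_eq (hS : IsLocallyTransitive S) (huv : G.Adj u v)
    (huv' : G.Adj u' v') (h : Even (G.dist u' u)) : ∃ k ∈ S, k • u = u' ∧ k • v = v' := by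
  obtain ⟨k, hk, rfl⟩ := hS.exists_smul_eq h
  obtain ⟨l, hl, hlu, hlv⟩ := hS ((adj_smul_smul_iff k).2 huv) huv'
  exact ⟨l * k, mul_mem hl hk, by rw [mul_smul, hlu], by rw [mul_smul, hlv]⟩

end IsLocallyTransitive

end EdgeTransitivity

section HalfTreeDisplacement

variable {V : Type*} {G : SimpleGraph V} {hT : G.IsTree} {g : typePreservingAut hT}

theorem exists_disjoint_smul_halfTree {v : V} (hv : 3 ≤ (G.neighborSet v).encard)
    (hgv : g • v ≠ v) : ∃ c e, G.Adj v c ∧ G.Adj v e ∧ c ≠ e ∧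
      Disjoint (g • halfTree G v c) (halfTree G v c) ∧
      Disjoint (g • halfTree G v c) (halfTree G v e) := by
  set p := toward G v (g • v)
  set q := toward G (g • v) v
  have hvp : G.Adj v p := adj_toward hT hgv.symm
  have hq : G.Adj (g • v) q := adj_toward hT hgv
  obtain ⟨c, hvc, hcp, hcq⟩ := exists_adj_ne_ne hv p (g⁻¹ • q)
  obtain ⟨e, hve, hep, hec⟩ := exists_adj_ne_ne hv p c
  have hgvc : G.Adj (g • v) (g • c) := (adj_smul_smul_iff g).2 hvc
  have hv_mem : v ∈ halfTree G (g • c) (g • v) := by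
    rw [← compl_halfTree hT hgvc]
    have hne : q ≠ g • c := fun h => hcq (eq_inv_smul_iff.2 h.symm)
    exact Set.disjoint_left.1 (disjoint_halfTree hT hq hgvc hne) (mem_halfTree_toward hT hgv)
  have hsubset : g • halfTree G v c ⊆ halfTree G v p := by
    rw [smul_halfTree]
    exact halfTree_subset_halfTree hT hvp hgvc (mem_halfTree_toward hT hgv.symm) hv_mem
  exact ⟨c, e, hvc, hve, hec.symm, (disjoint_halfTree hT hvp hvc hcp.symm).mono_left hsubset,
    (disjoint_halfTree hT hvp hve hep.symm).mono_left hsubset⟩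

theorem exists_conj_smul_halfTree_subset
    (htop : IsLocallyTransitive (⊤ : Subgroup (typePreservingAut hT))) {v c c' : V}
    (hvc : G.Adj v c) (hcc' : G.Adj c c') (hc' : c' ≠ v)
    (hg : Disjoint (g • halfTree G v c) (halfTree G v c)) :
    ∃ k : typePreservingAut hT, (k * g * k⁻¹) • halfTree G c v ⊆ halfTree G v c := by
  obtain ⟨k, -, hkc, hkc'⟩ := htop hcc' hvc.symm
  have hkv : v ≠ k • v := fun h => hc' (MulAction.injective k (hkc'.trans h))
  have hinv : k⁻¹ • halfTree G c v = halfTree G c c' := by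
    rw [inv_smul_eq_iff, smul_halfTree, hkc, hkc']
  refine ⟨k, ?_⟩
  calc (k * g * k⁻¹) • halfTree G c v
      = k • g • halfTree G c c' := by rw [mul_smul, mul_smul, hinv]
    _ ⊆ k • g • halfTree G v c := by
        gcongr
        exact halfTree_subset_halfTree_of_ne hT hvc hcc' hc'.symm
    _ ⊆ k • halfTree G c v := by
        gcongr
        exact compl_halfTree hT hvc ▸ hg.subset_compl_right
    _ = halfTree G c (k • v) := by rw [smul_halfTree, hkc]
    _ ⊆ halfTree G v c :=
        halfTree_subset_halfTree_of_ne hT hvc (hkc ▸ (adj_smul_smul_iff k).2 hvc.symm) hkv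

end HalfTreeDisplacement

section NormalSubgroup

variable {V : Type*} {G : SimpleGraph V} {hT : G.IsTree} {N : Subgroup (typePreservingAut hT)}
  [N.Normal]

theorem exists_mem_pairwise_disjoint_pow_smul_halfTree (hthick : ∀ v, 3 ≤ (G.neighborSet v).encard)
    (htop : IsLocallyTransitive (⊤ : Subgroup (typePreservingAut hT))) (hN : N ≠ ⊥) :
    ∃ h ∈ N, ∃ u v, G.Adj u v ∧ Pairwise (Disjoint on fun n : ℕ => h ^ n • halfTree G u v) := by
  obtain ⟨g, hgN, hg⟩ := N.bot_or_exists_ne_one.resolve_left hN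
  obtain ⟨v, hgv⟩ : ∃ v, g • v ≠ v := by
    by_contra! h
    exact hg (Subtype.ext (Equiv.ext h))
  obtain ⟨c, e, hvc, hve, hce, hdisj_c, hdisj_e⟩ := exists_disjoint_smul_halfTree (hthick v) hgv
  obtain ⟨c', hcc', hc', -⟩ := exists_adj_ne_ne (hthick c) v v
  obtain ⟨k, hk⟩ := exists_conj_smul_halfTree_subset htop hvc hcc' hc' hdisj_c
  set s := k * g * k⁻¹
  have hsN : s ∈ N := ‹N.Normal›.conj_mem g hgN k
  have hB : halfTree G v e ⊆ halfTree G c v := halfTree_subset_halfTree_of_ne hT hvc.symm hve hce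
  have hgD : g • halfTree G v c ⊆ halfTree G c v :=
    compl_halfTree hT hvc ▸ hdisj_c.subset_compl_right
  refine ⟨s * g, mul_mem hsN hgN, s • v, s • e, (adj_smul_smul_iff s).2 hve, ?_⟩
  rw [← smul_halfTree]
  refine pairwise_disjoint_pow_smul (D := halfTree G v c) ?_ ?_ ?_
  · exact (Set.smul_set_mono hB).trans hk
  · rw [mul_smul]
    exact (Set.smul_set_mono hgD).trans hk
  · rwa [mul_smul, Set.disjoint_smul_set]

theorem fixingSubgroup_compl_le_of_pairwise_disjoint {h : typePreservingAut hT} (hh : h ∈ N)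
    {B : Set V} (hB : Pairwise (Disjoint on fun n : ℕ => h ^ n • B)) :
    fixingSubgroup (typePreservingAut hT) Bᶜ ≤ N := by
  intro g hg
  obtain ⟨f, hfg, hf⟩ := exists_commutatorElement_eq (g := g) (h := h)
    (fun x hx => (mem_fixingSubgroup_iff _).1 hg x hx) hB
  have hclosure : Subgroup.closure {g.1, h.1} ≤ typePreservingAut hT := by
    rw [Subgroup.closure_le, Set.pair_subset_iff]
    exact ⟨g.2, h.2⟩
  have hf_mem : f ∈ typePreservingAut hT := mem_typePreservingAut_of_forall_pair hT fun x y =>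
    (hf x y).imp fun p hp => ⟨hclosure hp.1, hp.2⟩
  have hg_eq : g = ⟨f, hf_mem⟩ * h * ⟨f, hf_mem⟩⁻¹ * h⁻¹ := Subtype.ext hfg.symm
  rw [hg_eq]
  exact mul_mem (‹N.Normal›.conj_mem h hh _) (inv_mem hh)

theorem fixingSubgroup_smul_le (g : typePreservingAut hT) {B : Set V}
    (hB : fixingSubgroup (typePreservingAut hT) B ≤ N) :
    fixingSubgroup (typePreservingAut hT) (g • B) ≤ N := by
  rw [SubMulAction.fixingSubgroup_smul_eq_fixingSubgroup_map_conj]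
  exact (Subgroup.map_mono hB).trans (Subgroup.map_le_iff_le_comap.2 fun n hn =>
    ‹N.Normal›.conj_mem n hn g)

theorem fixingSubgroup_halfTree_le (hthick : ∀ v, 3 ≤ (G.neighborSet v).encard)
    (htop : IsLocallyTransitive (⊤ : Subgroup (typePreservingAut hT))) (hN : N ≠ ⊥) {x y : V}
    (hxy : G.Adj x y) : fixingSubgroup (typePreservingAut hT) (halfTree G x y) ≤ N := by
  obtain ⟨h, hh, v, u, hvu, hdisj⟩ := exists_mem_pairwise_disjoint_pow_smul_halfTree hthick htop hN
  have huv_le : fixingSubgroup (typePreservingAut hT) (halfTree G u v) ≤ N :=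
    compl_halfTree hT hvu ▸ fixingSubgroup_compl_le_of_pairwise_disjoint hh hdisj
  have heven {a b : V} (hab : G.Adj a b) (ha : Even (G.dist a u)) :
      fixingSubgroup (typePreservingAut hT) (halfTree G a b) ≤ N := by
    obtain ⟨k, -, rfl, rfl⟩ := htop.exists_smul_eq_and_smul_eq hvu.symm hab ha
    rw [← smul_halfTree]
    exact fixingSubgroup_smul_le k huv_le
  by_cases hx : Even (G.dist x u)
  · exact heven hxy hx
  · obtain ⟨z, hyz, hzx, -⟩ := exists_adj_ne_ne (hthick y) x x
    have hy : Even (G.dist y u) := by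
      have := hT.dist_eq_dist_add_one_of_adj u hxy
      grind [SimpleGraph.dist_comm]
    exact (fixingSubgroup_antitone _ _
      (halfTree_subset_halfTree_of_ne hT hxy hyz hzx.symm)).trans (heven hyz hy)

theorem eq_top_of_normal_of_ne_bot (hG : IsSemiregular G)
    (hthick : ∀ v, 3 ≤ (G.neighborSet v).encard) (hN : N ≠ ⊥) : N = ⊤ := by
  have htop : IsLocallyTransitive (⊤ : Subgroup (typePreservingAut hT)) :=
    isLocallyTransitive_of_fixingSubgroup_halfTree_le hG hthick fun _ _ _ => le_top
  have hN_le {u v : V} : G.Adj u v → fixingSubgroup (typePreservingAut hT) (halfTree G u v) ≤ N :=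
    fixingSubgroup_halfTree_le hthick htop hN
  have hN_trans : IsLocallyTransitive N :=
    isLocallyTransitive_of_fixingSubgroup_halfTree_le hG hthick fun _ _ => hN_le
  refine (Subgroup.eq_top_iff' N).2 fun g => ?_
  obtain ⟨u⟩ := hT.connected.nonempty
  obtain ⟨v, huv, -⟩ := exists_adj_ne_ne (hthick u) u u
  obtain ⟨k, hk, hku, hkv⟩ := hN_trans.exists_smul_eq_and_smul_eq huv
    ((adj_smul_smul_iff g).2 huv) (SimpleGraph.dist_comm ▸ even_dist_smul g u)
  have hedge : k⁻¹ * g ∈ N := by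
    refine sup_le (hN_le huv) (hN_le huv.symm) (mem_sup_fixingSubgroup_halfTree huv ?_ ?_)
    · rw [mul_smul, ← hku, inv_smul_smul]
    · rw [mul_smul, ← hkv, inv_smul_smul]
  exact (Subgroup.mul_mem_cancel_left N (inv_mem hk)).1 hedge

end NormalSubgroup

theorem nontrivial_typePreservingAut {V : Type*} {G : SimpleGraph V} (hT : G.IsTree)
    (hG : IsSemiregular G) (hthick : ∀ v, 3 ≤ (G.neighborSet v).encard) :
    Nontrivial (typePreservingAut hT) := by
  obtain ⟨v⟩ := hT.connected.nonempty
  obtain ⟨a, ha, -⟩ := exists_adj_ne_ne (hthick v) v v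
  obtain ⟨b, hb, hba, -⟩ := exists_adj_ne_ne (hthick v) a a
  obtain ⟨k, -, -, hka⟩ := isLocallyTransitive_of_fixingSubgroup_halfTree_le (hT := hT) hG hthick
    (S := ⊤) (fun _ _ _ => le_top) ha hb
  refine ⟨k, 1, ?_⟩
  rintro rfl
  exact hba (hka ▸ one_smul _ a)

theorem isSemiregular_of_ncard_eq {V : Type*} {G : SimpleGraph V} {d : ℕ} (hd : d ≠ 0)
    (hreg : ∀ v, (G.neighborSet v).ncard = d) : IsSemiregular G := by
  intro v w _
  have hfin (x : V) : (G.neighborSet x).Finite := Set.finite_of_ncard_ne_zero (hreg x ▸ hd)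
  have := (hfin v).to_subtype
  have := (hfin w).to_subtype
  exact Finite.card_eq.1 ((hreg v).trans (hreg w).symm)

end SemiregularTree

open SemiregularTree

theorem typePreservingAut_isSimpleGroup_general {V : Type*} {G : SimpleGraph V} (hT : G.IsTree)
    (hG : IsSemiregular G) (hthick : ∀ v, 3 ≤ (G.neighborSet v).encard) :
    IsSimpleGroup (typePreservingAut hT) where
  toNontrivial := nontrivial_typePreservingAut hT hG hthick
  eq_bot_or_eq_top_of_normal _ _ := or_iff_not_imp_left.2 (eq_top_of_normal_of_ne_bot hG hthick)

/-- For a `(q+1)`-regular tree `T` (with `q ≥ 2`) on an infinite vertex set, the group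
`Aut⁺(T)` of type-preserving automorphisms (those moving every vertex an even distance)
is a simple group. -/
theorem typePreservingAut_isSimpleGroup {V : Type*} [Infinite V] (q : ℕ) (hq : 2 ≤ q)
    (G : SimpleGraph V) (hconn : G.Connected) (hacyc : G.IsAcyclic)
    (hreg : ∀ v : V, (G.neighborSet v).ncard = q + 1)
    (A : Subgroup (Equiv.Perm V))
    (hA : (A : Set (Equiv.Perm V)) =
      {φ : Equiv.Perm V | (∀ v w : V, G.Adj (φ v) (φ w) ↔ G.Adj v w) ∧
        ∀ v : V, Even (G.dist v (φ v))}) :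
    IsSimpleGroup A := by
  obtain rfl : A = typePreservingAut ⟨hconn, hacyc⟩ := SetLike.coe_injective hA
  have hthick (v : V) : 3 ≤ (G.neighborSet v).encard := by
    refine le_trans ?_ (Set.ncard_le_encard _)
    rw [hreg]
    exact_mod_cast Nat.succ_le_succ hq
  exact typePreservingAut_isSimpleGroup_general _
    (isSemiregular_of_ncard_eq q.succ_ne_zero hreg) hthick
end

section
/- Let q ≥ 2 and let T be a simple graph on an infinite vertex set that is a tree (connected and acyclic) in which every vertex has degree exactly q+1. Then the subgroup of the automorphism group of T generated by the set of automorphisms that fix both endpoints of some edge (i.e., all φ such that there exist adjacent vertices v, w with φ(v) = v and φ(w) = w) is equal to the subgroup Aut⁺(T) of type-preserving automorphisms, namely those φ such that dist(v, φ(v)) is even for every vertex v. -/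
/-!
An automorphism fixing a vertex `v` moves each `u` to an even distance, because a walk from `u` to
`v` followed by the reverse of its image is a walk of even length from `u` to the image of `u`.

For the converse, a permutation of the neighbours of a vertex `v` extends to the whole tree:
walking away from `v`, choose at each vertex a bijection between its neighbours and those of its
image which respects the edge just travelled; it exists because vertices at even distance have
equally many neighbours. The resulting map is a covering map between trees, hence an isomorphism.
As `v` has a third neighbour, any neighbour of `v` can thus be carried to any other one by an
automorphism fixing an edge at `v`. Such automorphisms move every vertex to every vertex at even
distance, and correct a type-preserving automorphism to one fixing a given edge.
-/

open SimpleGraph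

section Cardinality

theorem nonempty_equiv_of_ncard_eq_succ {α β : Type*} {s : Set α} {t : Set β} {n : ℕ}
    (hs : s.ncard = n + 1) (ht : t.ncard = n + 1) : Nonempty (s ≃ t) := by
  have : Finite s := Set.finite_of_ncard_ne_zero (by lia)
  have : Finite t := Set.finite_of_ncard_ne_zero (by lia)
  exact Finite.card_eq.1 (hs.trans ht.symm)

theorem lt_encard_of_lt_ncard {α : Type*} {s : Set α} {n : ℕ} (h : n < s.ncard) :
    (n : ℕ∞) < s.encard :=
  (Nat.cast_lt.2 h).trans_le s.ncard_le_encard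

end Cardinality

section EvenDistance

variable {V : Type*} {G : SimpleGraph V}

theorem even_dist_iff_even_length (hG : G.IsBipartite) {u v : V} (p : G.Walk u v) :
    Even (G.dist u v) ↔ Even p.length := by
  obtain ⟨c⟩ := hG
  let c' : G.Coloring Bool := G.recolorOfEquiv finTwoEquiv c
  obtain ⟨q, hq⟩ := p.reachable.exists_walk_length_eq_dist
  rw [← hq, c'.even_length_iff_congr, c'.even_length_iff_congr]

theorem even_dist_of_adj_of_adj (hG : G.IsBipartite) {u v x y : V} (huv : G.Reachable u v)
    (heven : Even (G.dist u v)) (hx : G.Adj u x) (hy : G.Adj v y) : Even (G.dist x y) := by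
  obtain ⟨p⟩ := huv
  rw [even_dist_iff_even_length hG p] at heven
  rw [even_dist_iff_even_length hG (.cons hx.symm (p.concat hy)), Walk.length_cons,
    Walk.length_concat]
  exact heven.add even_two

theorem even_dist_apply_of_apply_eq_self (hG : G.IsBipartite) (φ : G →g G) {u v : V}
    (huv : G.Reachable u v) (hv : φ v = v) : Even (G.dist u (φ u)) := by
  obtain ⟨p⟩ := huv
  rw [even_dist_iff_even_length hG (p.append ((p.map φ).reverse.copy hv rfl))]
  simp

end EvenDistance

section Covering

variable {V W : Type*} {G : SimpleGraph V} {H : SimpleGraph W}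

theorem isChain_edges_map_of_injective_mapNeighborSet (f : G →g H)
    (hf : ∀ v, Function.Injective (f.mapNeighborSet v)) {u v : V} (p : G.Walk u v)
    (hp : p.edges.IsChain (· ≠ ·)) : (p.map f).edges.IsChain (· ≠ ·) := by
  induction p with
  | nil => simp
  | @cons u v _ huv p ih =>
    cases p with
    | nil => simp
    | @cons _ x _ hvx p =>
      simp only [Walk.edges_cons, Walk.map_cons, List.isChain_cons_cons] at hp ih ⊢
      refine ⟨fun heq ↦ hp.1 ?_, ih hp.2⟩
      have himage : f u = f x := by
        rwa [Sym2.eq_swap, Sym2.congr_right] at heq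
      have hux : u = x := congrArg Subtype.val
        (hf v (a₁ := ⟨u, huv.symm⟩) (a₂ := ⟨x, hvx⟩) (Subtype.ext himage))
      rw [hux, Sym2.eq_swap]

theorem injective_of_injective_mapNeighborSet (hG : G.Preconnected) (hH : H.IsAcyclic)
    (f : G →g H) (hf : ∀ v, Function.Injective (f.mapNeighborSet v)) : Function.Injective f := by
  intro u v huv
  obtain ⟨p, hp⟩ := (hG u v).exists_isPath
  have hchain : (p.map f).edges.IsChain (· ≠ ·) :=
    isChain_edges_map_of_injective_mapNeighborSet f hf p hp.isTrail.edges_nodup.isChain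
  have hpath : ((p.map f).copy rfl huv.symm).IsPath := by
    rwa [hH.isPath_iff_isChain, Walk.edges_copy]
  have hlength : p.length = 0 := by
    simpa using (Walk.isPath_iff_nil.1 hpath).length_eq_zero
  exact Walk.eq_of_length_eq_zero hlength

theorem surjective_of_surjective_mapNeighborSet [Nonempty V] (hH : H.Preconnected)
    (f : G →g H) (hf : ∀ v, Function.Surjective (f.mapNeighborSet v)) :
    Function.Surjective f := by
  have lift_walk {w w' : W} (p : H.Walk w w') (hw' : w' ∈ Set.range f) : w ∈ Set.range f := by
    induction p with
    | nil => exact hw'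
    | cons h _ ih =>
      obtain ⟨v, rfl⟩ := ih hw'
      obtain ⟨x, hx⟩ := hf v ⟨_, h.symm⟩
      exact ⟨x, congrArg Subtype.val hx⟩
  obtain ⟨v⟩ := ‹Nonempty V›
  intro w
  obtain ⟨p⟩ := hH w (f v)
  exact lift_walk p ⟨v, rfl⟩

theorem exists_iso_of_bijective_mapNeighborSet (hG : G.Connected) (hH : H.IsTree)
    (f : G →g H) (hf : ∀ v, Function.Bijective (f.mapNeighborSet v)) :
    ∃ φ : G ≃g H, ∀ v, φ v = f v := by
  have := hG.nonempty
  have hinj : Function.Injective f :=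
    injective_of_injective_mapNeighborSet hG.preconnected hH.isAcyclic f fun v ↦ (hf v).1
  have hsurj : Function.Surjective f :=
    surjective_of_surjective_mapNeighborSet hH.connected.preconnected f fun v ↦ (hf v).2
  refine ⟨⟨Equiv.ofBijective f ⟨hinj, hsurj⟩, fun {v w} ↦ ⟨fun h ↦ ?_, f.map_adj⟩⟩, fun _ ↦ rfl⟩
  obtain ⟨⟨x, hvx⟩, hx⟩ := (hf v).2 ⟨f w, h⟩
  rwa [← hinj (congrArg Subtype.val hx)]

end Covering

section Development

variable {V W : Type*} {G : SimpleGraph V} {H : SimpleGraph W} {R : V → W → Prop}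

/-- A partial isomorphism from `G` to `H` defined on the star of the vertex `v`: the image of `v`
together with a bijection between neighbours, along which the relation `R` holds. -/
structure StarIso (G : SimpleGraph V) (H : SimpleGraph W) (R : V → W → Prop) (v : V) where
  target : W
  equiv : G.neighborSet v ≃ H.neighborSet target
  rel : ∀ x : G.neighborSet v, R x (equiv x)

/-- The one-step extension property of a relation `R` between the vertices of two graphs: if `R v w`
then any pair of an edge at `v` and an edge at `w` extends to an isomorphism of the stars of `v` and
`w`, along which `R` holds. -/
def IsStarExtensible (G : SimpleGraph V) (H : SimpleGraph W) (R : V → W → Prop) : Prop :=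
  ∀ ⦃v w⦄, R v w → ∀ (a : G.neighborSet v) (b : H.neighborSet w),
    ∃ e : G.neighborSet v ≃ H.neighborSet w, e a = b ∧ ∀ x : G.neighborSet v, R x (e x)

namespace StarIso

theorem exists_adj_extension (hR : IsStarExtensible G H R) {u : V} (s : StarIso G H R u)
    (v : G.neighborSet u) :
    ∃ e : G.neighborSet (v : V) ≃ H.neighborSet (s.equiv v : W),
      e ⟨u, v.2.symm⟩ = ⟨s.target, (s.equiv v).2.symm⟩ ∧
        ∀ x : G.neighborSet (v : V), R x (e x) :=
  hR (s.rel v) _ _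

/-- The continuation of a star isomorphism at `u` to a neighbour `v` of `u`, chosen to agree with
the given one on the edge from `u` to `v`. -/
noncomputable def extend (hR : IsStarExtensible G H R) {u : V} (s : StarIso G H R u)
    (v : G.neighborSet u) : StarIso G H R v where
  target := s.equiv v
  equiv := (s.exists_adj_extension hR v).choose
  rel := (s.exists_adj_extension hR v).choose_spec.2

theorem extend_equiv_apply (hR : IsStarExtensible G H R) {u : V} (s : StarIso G H R u)
    (v : G.neighborSet u) :
    (s.extend hR v).equiv ⟨u, v.2.symm⟩ = ⟨s.target, (s.equiv v).2.symm⟩ :=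
  (s.exists_adj_extension hR v).choose_spec.1

/-- The continuation of a star isomorphism at `r` along a walk. The walk is directed towards `r`, so
that the recursion on walks adds the edge farthest from `r`. -/
noncomputable def develop (hR : IsStarExtensible G H R) {r : V} (s : StarIso G H R r) :
    ∀ {v : V}, G.Walk v r → StarIso G H R v
  | _, .nil => s
  | _, .cons h p => (s.develop hR p).extend hR ⟨_, h.symm⟩

end StarIso

theorem eq_cons_or_eq_cons_of_adj (hG : G.IsAcyclic) {u v r : V} {p : G.Walk u r}
    {q : G.Walk v r} (hp : p.IsPath) (hq : q.IsPath) (h : G.Adj u v) :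
    p = .cons h q ∨ q = .cons h.symm p := by
  by_cases hu : u ∈ q.support
  · right
    have hconcat : q.reverse = p.reverse.concat h :=
      hG.path_concat hp.reverse hq.reverse h (by simpa using hu)
    simpa using congrArg Walk.reverse hconcat
  · left
    exact congrArg Subtype.val
      ((hG.subsingleton_path u r).elim ⟨p, hp⟩ ⟨_, hq.cons hu⟩)

theorem StarIso.develop_equiv_apply (hG : G.IsAcyclic) (hR : IsStarExtensible G H R) {r : V}
    (s : StarIso G H R r) {u v : V} {p : G.Walk u r} {q : G.Walk v r} (hp : p.IsPath)
    (hq : q.IsPath) (h : G.Adj u v) :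
    ((s.develop hR p).equiv ⟨v, h⟩ : W) = (s.develop hR q).target := by
  rcases eq_cons_or_eq_cons_of_adj hG hp hq h with rfl | rfl
  · exact congrArg Subtype.val ((s.develop hR q).extend_equiv_apply hR ⟨u, h.symm⟩)
  · rfl

theorem StarIso.exists_iso (hG : G.IsTree) (hH : H.IsTree) (hR : IsStarExtensible G H R) {r : V}
    (s : StarIso G H R r) :
    ∃ φ : G ≃g H, φ r = s.target ∧ ∀ x : G.neighborSet r, φ x = s.equiv x := by
  choose path hpath _ using fun v ↦ hG.existsUnique_path v r
  let star (v : V) : StarIso G H R v := s.develop hR (path v)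
  have star_apply {u v : V} (h : G.Adj u v) : ((star u).equiv ⟨v, h⟩ : W) = (star v).target :=
    s.develop_equiv_apply hG.isAcyclic hR (hpath u) (hpath v) h
  have star_root : star r = s := by
    have hnil : path r = .nil := (Walk.isPath_iff_nil.1 (hpath r)).eq_nil
    simp only [star, hnil, develop]
  let f : G →g H :=
    ⟨fun v ↦ (star v).target, fun {u v} h ↦ star_apply h ▸ ((star u).equiv ⟨v, h⟩).2⟩
  have f_bijective (v : V) : Function.Bijective (f.mapNeighborSet v) := by
    have : f.mapNeighborSet v = (star v).equiv :=
      funext fun x ↦ Subtype.ext (star_apply x.2).symm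
    exact this ▸ (star v).equiv.bijective
  obtain ⟨φ, hφ⟩ := exists_iso_of_bijective_mapNeighborSet hG.connected hH f f_bijective
  refine ⟨φ, (hφ r).trans (congrArg target star_root), fun x ↦ ?_⟩
  rw [hφ, ← star_root]
  exact (star_apply x.2).symm

end Development

section Automorphisms

variable {V : Type*} {G : SimpleGraph V}

/-- The automorphism group of a graph, as a group of permutations of its vertices. -/
def automorphismSubgroup (G : SimpleGraph V) : Subgroup (Equiv.Perm V) where
  carrier := {φ | ∀ v w, G.Adj (φ v) (φ w) ↔ G.Adj v w}
  one_mem' _ _ := Iff.rfl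
  mul_mem' hφ hψ _ _ := (hφ _ _).trans (hψ _ _)
  inv_mem' {φ} hφ v w := by simpa using (hφ (φ⁻¹ v) (φ⁻¹ w)).symm

/-- The automorphisms of a graph that fix both endpoints of some edge. -/
def edgeFixingAut (G : SimpleGraph V) : Set (Equiv.Perm V) :=
  {φ | (∀ v w, G.Adj (φ v) (φ w) ↔ G.Adj v w) ∧ ∃ v w, G.Adj v w ∧ φ v = v ∧ φ w = w}

/-- The automorphisms of a graph that move every vertex by an even distance. This is a mere set of
permutations, since in a graph with odd cycles it need not be a subgroup. -/
def typePreservingAut (G : SimpleGraph V) : Set (Equiv.Perm V) :=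
  {φ | (∀ v w, G.Adj (φ v) (φ w) ↔ G.Adj v w) ∧ ∀ v, Even (G.dist v (φ v))}

theorem closure_edgeFixingAut_le_automorphismSubgroup :
    Subgroup.closure (edgeFixingAut G) ≤ automorphismSubgroup G :=
  (Subgroup.closure_le _).2 fun _ hφ ↦ hφ.1

theorem edgeFixingAut_subset_typePreservingAut (hG : G.IsBipartite) (hconn : G.Preconnected) :
    edgeFixingAut G ⊆ typePreservingAut G := by
  rintro φ ⟨hφ, v, -, -, hv, -⟩
  let f : G →g G := ⟨φ, (hφ _ _).2⟩
  exact ⟨hφ, fun u ↦ even_dist_apply_of_apply_eq_self hG f (hconn u v) hv⟩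

theorem exists_smul_eq_of_even_length {M : Type*} [Monoid M] [MulAction M V]
    (hM : ∀ ⦃v a b⦄, G.Adj v a → G.Adj v b → ∃ g : M, g • a = b) :
    ∀ {v w : V} (p : G.Walk v w), Even p.length → ∃ g : M, g • v = w
  | _, _, .nil, _ => ⟨1, one_smul _ _⟩
  | _, _, .cons _ .nil, heven => by simp at heven
  | _, _, .cons h (.cons h' p), heven => by
    obtain ⟨g, hg⟩ := hM h.symm h'
    obtain ⟨k, hk⟩ := exists_smul_eq_of_even_length hM p (by
      simpa [Nat.even_add_one] using heven)
    exact ⟨k * g, by rw [mul_smul, hg, hk]⟩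

theorem typePreservingAut_subset_closure_edgeFixingAut (hG : G.Preconnected)
    {v w : V} (hvw : G.Adj v w)
    (hlocal : ∀ ⦃v a b⦄, G.Adj v a → G.Adj v b → ∃ φ ∈ edgeFixingAut G, φ v = v ∧ φ a = b) :
    typePreservingAut G ⊆ Subgroup.closure (edgeFixingAut G) := by
  set K := Subgroup.closure (edgeFixingAut G)
  have hK : K ≤ automorphismSubgroup G := closure_edgeFixingAut_le_automorphismSubgroup
  have exists_mem_of_even {v w : V} (heven : Even (G.dist v w)) : ∃ g ∈ K, g v = w := by
    obtain ⟨p, hp⟩ := (hG v w).exists_walk_length_eq_dist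
    obtain ⟨g, hg⟩ := exists_smul_eq_of_even_length (M := K) (fun _ _ _ ha hb ↦
      let ⟨φ, hφ, _, hab⟩ := hlocal ha hb
      ⟨⟨φ, Subgroup.subset_closure hφ⟩, hab⟩) p (hp ▸ heven)
    exact ⟨g, g.2, hg⟩
  rintro φ ⟨hφ, heven⟩
  obtain ⟨g, hgK, hgv⟩ := exists_mem_of_even (heven v)
  have fix_v : (g⁻¹ * φ) v = v := Equiv.Perm.inv_eq_iff_eq.2 hgv.symm
  have hgφ : g⁻¹ * φ ∈ automorphismSubgroup G := mul_mem (inv_mem (hK hgK)) hφ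
  have hvw' : G.Adj v ((g⁻¹ * φ) w) := by simpa only [fix_v] using (hgφ v w).2 hvw
  obtain ⟨k, hk, hkv, hkw⟩ := hlocal hvw hvw'
  have hkK : k ∈ K := Subgroup.subset_closure hk
  have hfix : k⁻¹ * (g⁻¹ * φ) ∈ K := by
    refine Subgroup.subset_closure ⟨mul_mem (inv_mem (hK hkK)) hgφ, v, w, hvw, ?_, ?_⟩
    · rw [Equiv.Perm.mul_apply, fix_v, Equiv.Perm.inv_eq_iff_eq, hkv]
    · rw [Equiv.Perm.mul_apply, Equiv.Perm.inv_eq_iff_eq, hkw]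
  rwa [K.mul_mem_cancel_left (inv_mem hkK), K.mul_mem_cancel_left (inv_mem hgK)] at hfix

end Automorphisms

section BiregularTree

variable {V : Type*} {G : SimpleGraph V}

theorem isStarExtensible_even_dist (hG : G.IsBipartite) (hconn : G.Preconnected)
    (hbireg : ∀ v w, Even (G.dist v w) → Nonempty (G.neighborSet v ≃ G.neighborSet w)) :
    IsStarExtensible G G fun v w ↦ Even (G.dist v w) := by
  classical
  intro v w hvw a b
  obtain ⟨e⟩ := hbireg v w hvw
  refine ⟨e.trans (Equiv.swap (e a) b), by simp, fun x ↦ ?_⟩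
  exact even_dist_of_adj_of_adj hG (hconn v w) hvw x.2 (Subtype.prop _)

theorem exists_iso_extending_perm_neighborSet (hG : G.IsTree)
    (hbireg : ∀ v w, Even (G.dist v w) → Nonempty (G.neighborSet v ≃ G.neighborSet w))
    (v : V) (σ : Equiv.Perm (G.neighborSet v)) :
    ∃ φ : G ≃g G, φ v = v ∧ ∀ x : G.neighborSet v, φ x = σ x :=
  StarIso.exists_iso hG hG
    (isStarExtensible_even_dist hG.isBipartite hG.connected.preconnected hbireg)
    ⟨v, σ, fun x ↦ even_dist_of_adj_of_adj hG.isBipartite (.refl v) (by simp) x.2 (σ x).2⟩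

theorem exists_mem_edgeFixingAut_apply_eq (hG : G.IsTree)
    (hbireg : ∀ v w, Even (G.dist v w) → Nonempty (G.neighborSet v ≃ G.neighborSet w))
    {v a b : V} (hdeg : 2 < (G.neighborSet v).encard) (ha : G.Adj v a) (hb : G.Adj v b) :
    ∃ φ ∈ edgeFixingAut G, φ v = v ∧ φ a = b := by
  classical
  let a' : G.neighborSet v := ⟨a, ha⟩
  let b' : G.neighborSet v := ⟨b, hb⟩
  obtain ⟨φ, hφv, hφ⟩ := exists_iso_extending_perm_neighborSet hG hbireg v (Equiv.swap a' b')
  have hpair : ({a, b} : Set V).encard ≤ 2 :=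
    (Set.encard_insert_le {b} a).trans (by simp [one_add_one_eq_two])
  obtain ⟨c, hc, hcab⟩ : ∃ c ∈ G.neighborSet v, c ∉ ({a, b} : Set V) :=
    Set.not_subset.1 fun hsub ↦ hdeg.not_ge ((Set.encard_le_encard hsub).trans hpair)
  have hca : (⟨c, hc⟩ : G.neighborSet v) ≠ a' :=
    fun h ↦ hcab (.inl (congrArg Subtype.val h))
  have hcb : (⟨c, hc⟩ : G.neighborSet v) ≠ b' :=
    fun h ↦ hcab (.inr (congrArg Subtype.val h))
  refine ⟨φ.toEquiv, ⟨fun _ _ ↦ φ.map_rel_iff, v, c, hc, hφv, ?_⟩, hφv, ?_⟩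
  · exact (hφ ⟨c, hc⟩).trans (by rw [Equiv.swap_apply_of_ne_of_ne hca hcb])
  · exact (hφ a').trans (by rw [Equiv.swap_apply_left])

end BiregularTree

theorem closure_edgeFixing_eq_typePreservingAut_general {V : Type*} {G : SimpleGraph V}
    (hG : G.IsTree)
    (hbireg : ∀ v w, Even (G.dist v w) → Nonempty (G.neighborSet v ≃ G.neighborSet w))
    (hdeg : ∀ v, 2 < (G.neighborSet v).encard)
    (A : Subgroup (Equiv.Perm V)) (hA : (A : Set (Equiv.Perm V)) = typePreservingAut G) :
    Subgroup.closure (edgeFixingAut G) = A := by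
  apply le_antisymm
  · rw [Subgroup.closure_le, hA]
    exact edgeFixingAut_subset_typePreservingAut hG.isBipartite hG.connected.preconnected
  · rw [← SetLike.coe_subset_coe, hA]
    obtain ⟨v⟩ := hG.connected.nonempty
    obtain ⟨w, hvw⟩ : (G.neighborSet v).Nonempty := Set.encard_pos.1 (pos_of_gt (hdeg v))
    exact typePreservingAut_subset_closure_edgeFixingAut hG.connected.preconnected hvw
      fun v _ _ ↦ exists_mem_edgeFixingAut_apply_eq hG hbireg (hdeg v)

/-- For a `(q+1)`-regular tree `T` (with `q ≥ 2`) on an infinite vertex set, the subgroup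
of `Aut(T)` generated by the automorphisms fixing both endpoints of some edge is exactly
the group `Aut⁺(T)` of type-preserving automorphisms. -/
theorem closure_edgeFixing_eq_typePreservingAut {V : Type*} [Infinite V] (q : ℕ)
    (hq : 2 ≤ q) (G : SimpleGraph V) (hconn : G.Connected) (hacyc : G.IsAcyclic)
    (hreg : ∀ v : V, (G.neighborSet v).ncard = q + 1)
    (A : Subgroup (Equiv.Perm V))
    (hA : (A : Set (Equiv.Perm V)) =
      {φ : Equiv.Perm V | (∀ v w : V, G.Adj (φ v) (φ w) ↔ G.Adj v w) ∧
        ∀ v : V, Even (G.dist v (φ v))}) :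
    Subgroup.closure {φ : Equiv.Perm V |
        (∀ v w : V, G.Adj (φ v) (φ w) ↔ G.Adj v w) ∧
        ∃ v w : V, G.Adj v w ∧ φ v = v ∧ φ w = w} = A :=
  closure_edgeFixing_eq_typePreservingAut_general ⟨hconn, hacyc⟩
    (fun v w _ ↦ nonempty_equiv_of_ncard_eq_succ (hreg v) (hreg w))
    (fun v ↦ lt_encard_of_lt_ncard (hreg v ▸ Nat.lt_succ_of_le hq)) A hA
end

section
/- Let q ≥ 2 and let T be a simple graph on an infinite vertex set that is a tree (connected and acyclic) in which every vertex has degree exactly q+1. Let H be the subgroup of the automorphism group of T generated by the set of automorphisms fixing both endpoints of some edge. Then H acts transitively on the (unordered) edges of T: for any adjacent vertices v, w and any adjacent vertices v', w', there exists φ ∈ H with {φ(v), φ(w)} = {v', w'}. -/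
/-!
Root the tree at a vertex `r`. A bijection between the neighbours of `r` extends to an
automorphism fixing `r`, one generation at a time, because vertices of the same depth have equally
many children. In particular two neighbours `a`, `b` of `r` are exchanged by an automorphism that
fixes `r` and all other neighbours of `r`; since `r` has a third neighbour, this automorphism fixes
an edge. So the group can turn any edge about either endpoint onto any adjacent edge, and
connectedness of the tree carries it to every edge.
-/

open scoped Cardinal

section Children

variable {V : Type*} {G : SimpleGraph V} {r x y : V}

/-- The children of the vertex `x` when `G` is rooted at `r`: the neighbours of `x` one step
further from `r`. -/
def children (G : SimpleGraph V) (r x : V) : Set V :=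
  {y | G.Adj x y ∧ G.dist r y = G.dist r x + 1}

theorem children_root (G : SimpleGraph V) (r : V) : children G r r = G.neighborSet r := by
  ext y
  simp [children, SimpleGraph.dist_eq_one_iff_adj]

theorem root_notMem_children : r ∉ children G r x := fun h => by
  simpa using h.2

theorem exists_mem_children (hG : G.Connected) (hy : y ≠ r) : ∃ x, y ∈ children G r x := by
  obtain ⟨p, hp⟩ := hG.exists_walk_length_eq_dist y r
  cases p with
  | nil => exact absurd rfl hy
  | @cons _ x _ hyx p =>
    refine ⟨x, hyx.symm, ?_⟩
    have hxr : G.dist x r ≤ p.length := SimpleGraph.dist_le p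
    have hyr : G.dist y r ≤ G.dist y x + G.dist x r := hG.dist_triangle
    rw [SimpleGraph.dist_eq_one_iff_adj.mpr hyx] at hyr
    rw [SimpleGraph.Walk.length_cons] at hp
    rw [G.dist_comm (u := r), G.dist_comm (u := r)]
    omega

@[elab_as_elim]
theorem children_induction (hG : G.Connected) {motive : V → Prop} (root : motive r)
    (child : ∀ x, ∀ y ∈ children G r x, motive x → motive y) (y : V) : motive y := by
  induction hn : G.dist r y generalizing y with
  | zero => exact hG.dist_eq_zero_iff.mp hn ▸ root
  | succ n ih =>
    have hy : y ≠ r := by rintro rfl; simp at hn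
    obtain ⟨x, hx⟩ := exists_mem_children hG hy
    exact child x y hx (ih x (by have := hx.2; omega))

theorem eq_of_mem_children {x' : V} (hG : G.IsTree) (hx : y ∈ children G r x)
    (hx' : y ∈ children G r x') : x = x' := by
  obtain ⟨p, hp⟩ := hG.connected.exists_walk_length_eq_dist r x
  obtain ⟨p', hp'⟩ := hG.connected.exists_walk_length_eq_dist r x'
  have hpath : (p.concat hx.1).IsPath := SimpleGraph.Walk.isPath_of_length_eq_dist _ <| by
    rw [SimpleGraph.Walk.length_concat, hp, hx.2]
  have hpath' : (p'.concat hx'.1).IsPath := SimpleGraph.Walk.isPath_of_length_eq_dist _ <| by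
    rw [SimpleGraph.Walk.length_concat, hp', hx'.2]
  have heq : p.concat hx.1 = p'.concat hx'.1 := congrArg Subtype.val <|
    (hG.isAcyclic.subsingleton_path r y).elim ⟨_, hpath⟩ ⟨_, hpath'⟩
  simpa only [SimpleGraph.Walk.penultimate_concat] using
    congrArg SimpleGraph.Walk.penultimate heq

theorem adj_iff_mem_children (hG : G.IsTree) (r : V) :
    G.Adj x y ↔ y ∈ children G r x ∨ x ∈ children G r y := by
  refine ⟨fun h => ?_, fun h => h.elim (·.1) (·.1.symm)⟩
  exact (hG.dist_eq_dist_add_one_of_adj r h).symm.imp (⟨h, ·⟩) (⟨h.symm, ·⟩)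

theorem neighborSet_eq_insert_children (hG : G.IsTree) (hy : y ∈ children G r x) :
    G.neighborSet y = insert x (children G r y) := by
  ext z
  rw [SimpleGraph.mem_neighborSet, adj_iff_mem_children hG r, Set.mem_insert_iff, or_comm]
  exact or_congr_left ⟨fun hz => eq_of_mem_children hG hz hy, fun hz => hz ▸ hy⟩

theorem mk_neighborSet_eq_mk_children_add_one (hG : G.IsTree) (hy : y ∈ children G r x) :
    #(G.neighborSet y) = #(children G r y) + 1 := by
  have hx : x ∉ children G r y := fun hx => by have := hx.2; have := hy.2; omega
  rw [neighborSet_eq_insert_children hG hy, Cardinal.mk_insert hx]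

end Children

section Extension

variable {V V' : Type*} {G : SimpleGraph V} {G' : SimpleGraph V'} {r : V} {r' : V'} {f : V → V'}

theorem exists_children_rec {α : Type*} (hG : G.IsTree) (r : V) (a : α)
    (step : V → α → V → α) :
    ∃ f : V → α, f r = a ∧ ∀ x, ∀ y ∈ children G r x, f y = step x (f x) y := by
  classical
  let F (y : V) (f : ∀ x, G.dist r x < G.dist r y → α) : α :=
    if h : ∃ x, y ∈ children G r x then
      step h.choose (f h.choose (h.choose_spec.2 ▸ Nat.lt_succ_self _)) y
    else a
  have wf : WellFounded fun x y => G.dist r x < G.dist r y := (measure (G.dist r)).wf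
  refine ⟨wf.fix F, ?_, fun x y hy => ?_⟩
  · rw [wf.fix_eq]
    exact dif_neg fun ⟨_, hx⟩ => root_notMem_children hx
  · have h : ∃ x, y ∈ children G r x := ⟨x, hy⟩
    have hx : h.choose = x := eq_of_mem_children hG h.choose_spec hy
    rw [wf.fix_eq]
    exact (dif_pos h).trans (congrArg (fun z => step z (wf.fix F z) y) hx)

theorem injective_of_bijOn_children (hG : G.Connected) (hG' : G'.IsTree) (hr : f r = r')
    (hf : ∀ x, Set.BijOn f (children G r x) (children G' r' (f x))) : Function.Injective f := by
  have eq_root {z : V} (hz : f z = r') : z = r := by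
    by_contra hne
    obtain ⟨w, hw⟩ := exists_mem_children hG hne
    exact root_notMem_children (hz ▸ (hf w).mapsTo hw)
  intro y
  induction y using children_induction hG (r := r) with
  | root => exact fun z hz => (eq_root (hz ▸ hr)).symm
  | child x y hy ih =>
    intro z hz
    by_cases hzr : z = r
    · exact (eq_root (hz.trans (hzr ▸ hr))).trans hzr.symm
    obtain ⟨w, hw⟩ := exists_mem_children hG hzr
    have hfw : f y ∈ children G' r' (f w) := hz ▸ (hf w).mapsTo hw
    obtain rfl : x = w := ih (eq_of_mem_children hG' ((hf x).mapsTo hy) hfw)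
    exact (hf x).injOn hy hw hz

theorem surjective_of_bijOn_children (hG' : G'.Connected) (hr : f r = r')
    (hf : ∀ x, Set.BijOn f (children G r x) (children G' r' (f x))) : Function.Surjective f := by
  intro y'
  induction y' using children_induction hG' (r := r') with
  | root => exact ⟨r, hr⟩
  | child x' y' hy' ih =>
    obtain ⟨x, rfl⟩ := ih
    obtain ⟨y, -, rfl⟩ := (hf x).surjOn hy'
    exact ⟨y, rfl⟩

theorem exists_iso_eq_of_bijOn_children (hG : G.IsTree) (hG' : G'.IsTree) (hr : f r = r')
    (hf : ∀ x, Set.BijOn f (children G r x) (children G' r' (f x))) :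
    ∃ φ : G ≃g G', ⇑φ = f := by
  have hinj := injective_of_bijOn_children hG.connected hG' hr hf
  have hsurj := surjective_of_bijOn_children hG'.connected hr hf
  have mem_iff (x y : V) : f y ∈ children G' r' (f x) ↔ y ∈ children G r x := by
    rw [← (hf x).image_eq, hinj.mem_set_image]
  refine ⟨⟨Equiv.ofBijective f ⟨hinj, hsurj⟩, fun {x y} => ?_⟩, rfl⟩
  rw [adj_iff_mem_children hG r, adj_iff_mem_children hG' r']
  exact or_congr (mem_iff x y) (mem_iff y x)

theorem exists_iso_eqOn_neighborSet (hG : G.IsTree) (hG' : G'.IsTree) {σ : V → V' → V → V'}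
    (hσ : ∀ x x', G.dist r x = G'.dist r' x' →
      Set.BijOn (σ x x') (children G r x) (children G' r' x')) :
    ∃ φ : G ≃g G', φ r = r' ∧ Set.EqOn φ (σ r r') (G.neighborSet r) := by
  obtain ⟨f, hr, hf⟩ := exists_children_rec hG r r' σ
  have hdist (x : V) : G.dist r x = G'.dist r' (f x) := by
    induction x using children_induction hG.connected (r := r) with
    | root => rw [hr, SimpleGraph.dist_self, SimpleGraph.dist_self]
    | child x y hy ih => rw [hf x y hy, ((hσ x (f x) ih).mapsTo hy).2, hy.2, ih]
  have hbij (x : V) : Set.BijOn f (children G r x) (children G' r' (f x)) :=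
    (hσ x (f x) (hdist x)).congr fun y hy => (hf x y hy).symm
  obtain ⟨φ, rfl⟩ := exists_iso_eq_of_bijOn_children hG hG' hr hbij
  refine ⟨φ, hr, fun y hy => ?_⟩
  rw [hf r y (children_root G r ▸ hy), hr]

end Extension

theorem exists_bijOn_of_mk_eq {α : Type*} {s t : Set α} (h : #s = #t) :
    ∃ f : α → α, Set.BijOn f s t := by
  obtain ⟨e⟩ := Cardinal.eq.mp h
  have hext (a : s) : Function.extend Subtype.val (fun b : s => (e b : α)) id a = e a :=
    Subtype.val_injective.extend_apply _ _ a
  refine ⟨Function.extend Subtype.val (fun b : s => (e b : α)) id, ?_, ?_, ?_⟩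
  · intro a ha
    exact hext ⟨a, ha⟩ ▸ (e ⟨a, ha⟩).2
  · intro a ha b hb hab
    rw [hext ⟨a, ha⟩, hext ⟨b, hb⟩] at hab
    exact congrArg Subtype.val (e.injective (Subtype.ext hab))
  · intro b hb
    exact ⟨e.symm ⟨b, hb⟩, (e.symm ⟨b, hb⟩).2, by rw [hext, e.apply_symm_apply]⟩

section EdgeFixing

variable {V : Type*} {G : SimpleGraph V}

/-- The automorphisms of `G`, as permutations of the vertices, that fix both endpoints of some
edge. -/
def edgeFixing (G : SimpleGraph V) : Set (Equiv.Perm V) :=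
  {φ | (∀ a b : V, G.Adj (φ a) (φ b) ↔ G.Adj a b) ∧ ∃ a b : V, G.Adj a b ∧ φ a = a ∧ φ b = b}

-- Degrees may alternate with the parity of the depth, so the induction carries two generations.
theorem mk_neighborSet_eq_of_dist_eq (hG : G.Connected)
    (hdeg : ∀ v a b, G.Adj v a → G.Adj v b → #(G.neighborSet a) = #(G.neighborSet b))
    {r x x' : V} (hx : G.dist r x = G.dist r x') :
    #(G.neighborSet x) = #(G.neighborSet x') := by
  suffices H : #(G.neighborSet x) = #(G.neighborSet x') ∧
      ∀ y y', G.Adj x y → G.Adj x' y' → #(G.neighborSet y) = #(G.neighborSet y') from H.1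
  induction x using children_induction hG (r := r) generalizing x' with
  | root =>
    obtain rfl : r = x' := hG.dist_eq_zero_iff.mp (by rw [← hx, SimpleGraph.dist_self])
    exact ⟨rfl, hdeg r⟩
  | child u x hu ih =>
    have hne : x' ≠ r := by
      rintro rfl
      exact absurd (hu.2.symm.trans hx) (by simp)
    obtain ⟨u', hu'⟩ := exists_mem_children hG hne
    obtain ⟨huu', hnbr⟩ := ih (x' := u') (by have := hu.2; have := hu'.2; omega)
    refine ⟨hnbr x x' hu.1 hu'.1, fun y y' hy hy' => ?_⟩
    calc #(G.neighborSet y) = #(G.neighborSet u) := hdeg x y u hy hu.1.symm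
      _ = #(G.neighborSet u') := huu'
      _ = #(G.neighborSet y') := hdeg x' u' y' hu'.1.symm hy'

theorem mk_children_eq_of_dist_eq (hG : G.IsTree)
    (hdeg : ∀ v a b, G.Adj v a → G.Adj v b → #(G.neighborSet a) = #(G.neighborSet b))
    {r x x' : V} (hx : G.dist r x = G.dist r x') : #(children G r x) = #(children G r x') := by
  by_cases hxr : x = r
  · have hx'r : r = x' :=
      hG.connected.dist_eq_zero_iff.mp (by rw [← hx, hxr, SimpleGraph.dist_self])
    rw [hxr, ← hx'r]
  have hx'r : x' ≠ r := by
    rintro rfl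
    exact hxr (hG.connected.dist_eq_zero_iff.mp (hx.trans SimpleGraph.dist_self)).symm
  obtain ⟨u, hu⟩ := exists_mem_children hG.connected hxr
  obtain ⟨u', hu'⟩ := exists_mem_children hG.connected hx'r
  rw [← Cardinal.add_one_inj, ← mk_neighborSet_eq_mk_children_add_one hG hu,
    ← mk_neighborSet_eq_mk_children_add_one hG hu']
  exact mk_neighborSet_eq_of_dist_eq hG.connected hdeg hx

theorem exists_iso_eqOn_swap [DecidableEq V] (hG : G.IsTree)
    (hdeg : ∀ v a b, G.Adj v a → G.Adj v b → #(G.neighborSet a) = #(G.neighborSet b))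
    {r a b : V} (ha : G.Adj r a) (hb : G.Adj r b) :
    ∃ φ : G ≃g G, φ r = r ∧ Set.EqOn φ (Equiv.swap a b) (G.neighborSet r) := by
  have hswap : Set.BijOn (Equiv.swap a b) (children G r r) (children G r r) := by
    rw [children_root]
    exact Equiv.swap_bijOn_self (iff_of_true ha hb)
  have hσ (x x' : V) : ∃ g : V → V,
      (G.dist r x = G.dist r x' → Set.BijOn g (children G r x) (children G r x')) ∧
      (x = r → g = Equiv.swap a b) := by
    by_cases hx : x = r
    · refine ⟨Equiv.swap a b, fun h => ?_, fun _ => rfl⟩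
      obtain rfl : r = x' :=
        hG.connected.dist_eq_zero_iff.mp (by rw [← h, hx, SimpleGraph.dist_self])
      exact hx ▸ hswap
    · by_cases h : G.dist r x = G.dist r x'
      · obtain ⟨g, hg⟩ := exists_bijOn_of_mk_eq (mk_children_eq_of_dist_eq hG hdeg h)
        exact ⟨g, fun _ => hg, fun hxr => absurd hxr hx⟩
      · exact ⟨id, fun h' => absurd h' h, fun hxr => absurd hxr hx⟩
  choose σ hbij hroot using hσ
  obtain ⟨φ, hr, hφ⟩ := exists_iso_eqOn_neighborSet hG hG hbij
  exact ⟨φ, hr, hroot r r rfl ▸ hφ⟩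

theorem exists_mem_edgeFixing_apply_eq (hG : G.IsTree)
    (hdeg : ∀ v a b, G.Adj v a → G.Adj v b → #(G.neighborSet a) = #(G.neighborSet b))
    {r a b : V} (hr : 3 ≤ #(G.neighborSet r)) (ha : G.Adj r a) (hb : G.Adj r b) :
    ∃ φ ∈ edgeFixing G, φ r = r ∧ φ a = b := by
  classical
  obtain ⟨φ, hφr, hφ⟩ := exists_iso_eqOn_swap hG hdeg ha hb
  obtain ⟨⟨c, hc⟩, hca, hcb⟩ := Cardinal.exists_ne_ne_of_three_le hr ⟨a, ha⟩ ⟨b, hb⟩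
  have hφc : φ c = c := (hφ hc).trans <|
    Equiv.swap_apply_of_ne_of_ne (Subtype.coe_ne_coe.mpr hca) (Subtype.coe_ne_coe.mpr hcb)
  have hφa : φ a = b := (hφ ha).trans (Equiv.swap_apply_left a b)
  exact ⟨φ.toEquiv, ⟨fun _ _ => φ.map_adj_iff, r, c, hc, hφr, hφc⟩, hφr, hφa⟩

theorem exists_smul_pair_eq {M : Type*} [Monoid M] [MulAction M V] (hG : G.Preconnected)
    (hM : ∀ v a b, G.Adj v a → G.Adj v b → ∃ g : M, g • v = v ∧ g • a = b)
    {v w v' w' : V} (hvw : G.Adj v w) (hvw' : G.Adj v' w') :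
    ∃ g : M, ({g • v, g • w} : Set V) = {v', w'} := by
  obtain ⟨p⟩ := hG v v'
  induction p generalizing w with
  | nil =>
    obtain ⟨g, hgv, hgw⟩ := hM _ w w' hvw hvw'
    exact ⟨g, by rw [hgv, hgw]⟩
  | @cons v u _ hvu _ ih =>
    obtain ⟨g, hgv, hgw⟩ := hM v w u hvw hvu
    obtain ⟨h, hh⟩ := ih hvu.symm hvw'
    exact ⟨h * g, by rw [mul_smul, mul_smul, hgv, hgw, Set.pair_comm, hh]⟩

theorem closure_edgeFixing_transitive_on_edges_general (hG : G.IsTree)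
    (hdeg : ∀ v a b, G.Adj v a → G.Adj v b → #(G.neighborSet a) = #(G.neighborSet b))
    (hthree : ∀ v, 3 ≤ #(G.neighborSet v)) {v w v' w' : V} (hvw : G.Adj v w)
    (hvw' : G.Adj v' w') :
    ∃ φ ∈ Subgroup.closure (edgeFixing G), ({φ v, φ w} : Set V) = {v', w'} := by
  have hlocal (r a b : V) (ha : G.Adj r a) (hb : G.Adj r b) :
      ∃ g : Subgroup.closure (edgeFixing G), g • r = r ∧ g • a = b := by
    obtain ⟨φ, hφ, hr, hab⟩ := exists_mem_edgeFixing_apply_eq hG hdeg (hthree r) ha hb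
    exact ⟨⟨φ, Subgroup.subset_closure hφ⟩, hr, hab⟩
  obtain ⟨⟨φ, hφ⟩, hpair⟩ := exists_smul_pair_eq hG.connected.preconnected hlocal hvw hvw'
  exact ⟨φ, hφ, hpair⟩

end EdgeFixing

/-- For a `(q+1)`-regular tree `T` (with `q ≥ 2`) on an infinite vertex set, the subgroup
generated by the automorphisms fixing both endpoints of some edge acts transitively on
the unordered edges of `T`. -/
theorem closure_edgeFixing_transitive_on_edges {V : Type*} [Infinite V] (q : ℕ)
    (hq : 2 ≤ q) (G : SimpleGraph V) (hconn : G.Connected) (hacyc : G.IsAcyclic)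
    (hreg : ∀ v : V, (G.neighborSet v).ncard = q + 1) :
    ∀ v w v' w' : V, G.Adj v w → G.Adj v' w' →
      ∃ φ ∈ Subgroup.closure {φ : Equiv.Perm V |
          (∀ a b : V, G.Adj (φ a) (φ b) ↔ G.Adj a b) ∧
          ∃ a b : V, G.Adj a b ∧ φ a = a ∧ φ b = b},
        ({φ v, φ w} : Set V) = {v', w'} := by
  have hcard (v : V) : #(G.neighborSet v) = (q + 1 : ℕ) := by
    rw [← hreg v, Set.cast_ncard (Set.finite_of_ncard_ne_zero (by rw [hreg]; omega))]
  intro v w v' w' hvw hvw'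
  exact closure_edgeFixing_transitive_on_edges_general ⟨hconn, hacyc⟩
    (fun _ a b _ _ => (hcard a).trans (hcard b).symm)
    (fun u => by rw [hcard u]; exact_mod_cast Nat.succ_le_succ hq) hvw hvw'
end

section
/- For every natural number n with n ≥ 8, the alternating group on n letters is generated by the set of permutations that are products of four disjoint transpositions, i.e., the permutations whose cycle type is {2, 2, 2, 2}. -/
/-!
All permutations of a given cycle type form one conjugacy class, so the subgroup they generate is
the normal closure of any one of them. A nontrivial normal subgroup of the symmetric group on at
least five letters contains the alternating group, and the normal closure of an even permutation
lies in it.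
-/

section

open Equiv.Perm Subgroup

variable {α : Type*} [Fintype α] [DecidableEq α]

theorem normalClosure_singleton_eq_closure_cycleType (σ : Equiv.Perm α) :
    normalClosure {σ} = Subgroup.closure {τ : Equiv.Perm α | τ.cycleType = σ.cycleType} := by
  have conjugates_eq : Group.conjugatesOfSet {σ} = {τ | τ.cycleType = σ.cycleType} := by
    ext τ
    simp only [Group.mem_conjugatesOfSet_iff, Set.mem_singleton_iff, exists_eq_left,
      isConj_iff_cycleType_eq, Set.mem_ofPred_eq, eq_comm (a := σ.cycleType)]
  rw [normalClosure, conjugates_eq]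

theorem alternatingGroup_le_normalClosure_singleton (hα : 5 ≤ Nat.card α) {σ : Equiv.Perm α}
    (hσ : σ ≠ 1) : alternatingGroup α ≤ normalClosure {σ} :=
  alternatingGroup_le_of_normal hα <| (nontrivial_iff_ne_bot _).mpr <| by
    simpa [normalClosure_eq_bot_iff] using hσ

theorem closure_cycleType_eq_alternatingGroup (hα : 5 ≤ Nat.card α) {σ : Equiv.Perm α}
    (hσ : σ ≠ 1) (hσ_even : σ ∈ alternatingGroup α) :
    Subgroup.closure {τ : Equiv.Perm α | τ.cycleType = σ.cycleType} = alternatingGroup α := by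
  rw [← normalClosure_singleton_eq_closure_cycleType]
  exact le_antisymm (normalClosure_le_normal (Set.singleton_subset_iff.mpr hσ_even))
    (alternatingGroup_le_normalClosure_singleton hα hσ)

theorem alternatingGroup_eq_closure_four_disjoint_transpositions_general (hα : 8 ≤ Nat.card α) :
    Subgroup.closure {σ : Equiv.Perm α | σ.cycleType = {2, 2, 2, 2}} = alternatingGroup α := by
  obtain ⟨σ, hσ⟩ : ∃ σ : Equiv.Perm α, σ.cycleType = {2, 2, 2, 2} :=
    (exists_with_cycleType_iff α).mpr ⟨by simpa using hα, by simp⟩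
  have hσ_ne_one : σ ≠ 1 := by
    simp [← cycleType_eq_zero, hσ]
  have hσ_even : σ ∈ alternatingGroup α := by
    rw [mem_alternatingGroup, sign_of_cycleType, hσ]
    decide
  rw [← hσ]
  exact closure_cycleType_eq_alternatingGroup (by lia) hσ_ne_one hσ_even

end

/-- For `n ≥ 8`, the alternating group on `n` letters is generated by the permutations
that are products of four disjoint transpositions (cycle type `{2, 2, 2, 2}`). -/
theorem alternatingGroup_eq_closure_four_disjoint_transpositions (n : ℕ) (hn : 8 ≤ n) :
    Subgroup.closure {σ : Equiv.Perm (Fin n) | σ.cycleType = {2, 2, 2, 2}} =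
      alternatingGroup (Fin n) :=
  alternatingGroup_eq_closure_four_disjoint_transpositions_general (by simpa using hn)
end
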